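/- arXiv:2605.21025 — 5 statements merged into one kernel-verified Lean document; each statement's English description precedes it below -/
import Mathlib

section
/- Product Formula: Let G = ∏_{k ≥ 3} S_k^{a_k} be a tower group and set B = ∑_{k ≥ 3, k ≠ 4} a_k. Then LatAut(G) is isomorphic as a group to S_{a_4} × S_B, i.e., there is a multiplicative equivalence LatAut(G) ≃* Equiv.Perm (Fin (a 4)) × Equiv.Perm (Fin B). -/
/-!
The normal subgroups of `S_k` (`k ≥ 3`) are `1 < A_k < S_k`, with the Klein four-group `V` inserted
when `k = 4`. Let `N` be normal in a product of such groups. Commutators of elements of `N` with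
elements of a single factor lie in the intersection of `N` with that factor. Since `S_k` and
`S_4 / V` are centreless, each coordinate of each element of `N` is therefore constrained by that
intersection: it is trivial, or in `V`, or arbitrary, when the intersection is `1`, or `V`, or
contains the alternating group. Hence `N` consists of all elements satisfying these constraints
whose sign vector lies in the group `W` of sign vectors of `N` (`mem_iff`). So the lattice is
isomorphic to a lattice of triples `(T, U, W)` (`Model`, `latticeIso`) which sees only the index set
of the factors and which of them are `S_4`; every permutation of the factors preserving the latter
set acts on it, even if it exchanges non-isomorphic factors such as `S_3` and `S_5`.

Conversely, a lattice automorphism permutes the atoms, which correspond to the factors, and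
preserves the `S_4` factors, since above an atom and above no other atom there is a chain of length
three exactly for `S_4` (`Model.F_iff`). After composing with the induced automorphism of the model
it fixes all atoms, and then it is the identity (`Model.aut_eq_one`): the join-irreducible elements
with a given set of atoms below them form a chain, essentially because a vector over the field with
two elements is determined by its support.
-/

/-- The lattice of normal subgroups of `G`, ordered by inclusion. -/
abbrev NormalSubgroupLattice (G : Type*) [Group G] := {N : Subgroup G // N.Normal}

/-- The group of lattice automorphisms of the normal subgroup lattice of `G`. -/
abbrev LatAut (G : Type*) [Group G] :=
  NormalSubgroupLattice G ≃o NormalSubgroupLattice G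

namespace TowerGroup

/-! ### Normal subgroups of a single symmetric group -/

/-- What is used about one factor `H` with sign character `s`: its normal subgroups are `⊥`, a
subgroup `V < s.ker`, and subgroups containing `s.ker`; and both `H` and `H ⧸ V` are centreless.
For `S_4` the subgroup `V` is the Klein four-group; for the other `S_k` it is `⊥`, so that the first
two cases coincide. -/
structure IsLocalFactor {H : Type*} [Group H] (s : H →* ℤˣ) (V : Subgroup H) : Prop where
  surj : Function.Surjective s
  normal : V.Normal
  le_ker : V ≤ s.ker
  not_ker_le : ¬ s.ker ≤ V
  cases_of_normal : ∀ M : Subgroup H, M.Normal → M = ⊥ ∨ M = V ∨ s.ker ≤ M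
  mem_of_commutator_mem : ∀ g : H, (∀ h : H, g * h * g⁻¹ * h⁻¹ ∈ V) → g ∈ V
  eq_one_of_commutator_eq_one : ∀ g : H, (∀ h : H, g * h * g⁻¹ * h⁻¹ = 1) → g = 1

section SymmetricGroup

open Equiv Equiv.Perm

theorem perm_eq_one_of_commutator {k : ℕ} (hk : 3 ≤ k) (g : Perm (Fin k))
    (hg : ∀ h : Perm (Fin k), g * h * g⁻¹ * h⁻¹ = 1) : g = 1 := by
  ext1 x
  by_contra hx
  rw [Perm.one_apply] at hx
  -- a point outside `{x, g x}`; conjugation by `g` must preserve the transposition `(x z)`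
  obtain ⟨z, hz⟩ : ∃ z, z ∉ ({x, g x} : Finset (Fin k)) := by
    by_contra! h
    have h1 := Finset.card_le_card (fun z _ => h z : Finset.univ ⊆ ({x, g x} : Finset (Fin k)))
    have h2 := Finset.card_le_two (a := x) (b := g x)
    simp only [Finset.card_univ, Fintype.card_fin] at h1
    omega
  simp only [Finset.mem_insert, Finset.mem_singleton, not_or] at hz
  have h1 := hg (swap x z)
  rw [mul_inv_eq_one, mul_inv_eq_iff_eq_mul] at h1
  have h2 := DFunLike.congr_fun h1 x
  simp only [Perm.mul_apply, swap_apply_left] at h2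
  rw [swap_apply_of_ne_of_ne hx (Ne.symm hz.2)] at h2
  exact hz.1 (g.injective h2)

theorem alternatingGroup_le_of_isThreeCycle {α : Type*} [Fintype α] [DecidableEq α]
    {M : Subgroup (Perm α)} (hM : M.Normal) {c : Perm α} (hc : c.IsThreeCycle) (hcM : c ∈ M) :
    alternatingGroup α ≤ M := by
  rw [← closure_three_cycles_eq_alternating, Subgroup.closure_le]
  intro d hd
  obtain ⟨h, rfl⟩ := isConj_iff.1 (isConj_iff_cycleType_eq.2 (hc.trans (Eq.symm hd)))
  exact hM.conj_mem c hcM h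

/-- Every nontrivial element of `S_3` has a commutator that is a three-cycle. -/
theorem exists_commutator_three :
    ∀ g : Perm (Fin 3), g ≠ 1 → ∃ h : Perm (Fin 3), ∃ x y z : Fin 3, x ≠ y ∧ x ≠ z ∧ y ≠ z ∧
      g * h * g⁻¹ * h⁻¹ = swap x y * swap x z := by
  decide +kernel

/-- Every element of `S_4` outside the Klein four-group has a commutator that is a three-cycle. -/
theorem exists_commutator_four :
    ∀ g : Perm (Fin 4), ¬ (g * g = 1 ∧ sign g = 1) →
      ∃ h : Perm (Fin 4), ∃ x y z : Fin 4, x ≠ y ∧ x ≠ z ∧ y ≠ z ∧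
      g * h * g⁻¹ * h⁻¹ = swap x y * swap x z := by
  decide +kernel

/-- The Klein four-group in `S_4`, described as the set of even elements of order at most two. -/
def klein : Subgroup (Perm (Fin 4)) where
  carrier := {g | g * g = 1 ∧ sign g = 1}
  mul_mem' := by
    have : ∀ a b : Perm (Fin 4), (a * a = 1 ∧ sign a = 1) → (b * b = 1 ∧ sign b = 1) →
      (a * b * (a * b) = 1 ∧ sign (a * b) = 1) := by decide +kernel
    intro a b
    exact this a b
  one_mem' := by simp
  inv_mem' := by
    have : ∀ a : Perm (Fin 4), (a * a = 1 ∧ sign a = 1) → (a⁻¹ * a⁻¹ = 1 ∧ sign a⁻¹ = 1) := by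
      decide +kernel
    intro a
    exact this a

theorem mem_klein {g : Perm (Fin 4)} : g ∈ klein ↔ g * g = 1 ∧ sign g = 1 := Iff.rfl

/-- The nontrivial elements of the Klein four-group are conjugate in `S_4`, so that the Klein
four-group is a minimal normal subgroup. -/
theorem isConj_of_mem_klein : ∀ g v : Perm (Fin 4), (g * g = 1 ∧ sign g = 1) → g ≠ 1 →
    (v * v = 1 ∧ sign v = 1) → v = 1 ∨ ∃ h, h * g * h⁻¹ = v := by
  decide +kernel

theorem klein_ne_bot : klein ≠ ⊥ := by
  intro h
  have : swap 0 1 * swap 2 3 ∈ klein := by rw [mem_klein]; decide +kernel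
  rw [h, Subgroup.mem_bot] at this
  revert this
  decide +kernel

theorem isLocalFactor_klein : IsLocalFactor (sign : Perm (Fin 4) →* ℤˣ) klein where
  surj := sign_surjective _
  normal := ⟨by
    have : ∀ a b : Perm (Fin 4), (a * a = 1 ∧ sign a = 1) →
      (b * a * b⁻¹ * (b * a * b⁻¹) = 1 ∧ sign (b * a * b⁻¹) = 1) := by decide +kernel
    intro a ha b
    exact this a b ha⟩
  le_ker := fun g hg => hg.2
  not_ker_le := by
    intro h
    have : swap 0 1 * swap 0 2 ∈ klein := h (by rw [MonoidHom.mem_ker]; decide +kernel)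
    rw [mem_klein] at this
    revert this
    decide +kernel
  cases_of_normal := by
    intro M hM
    by_cases hle : M ≤ klein
    · by_cases hbot : M = ⊥
      · exact Or.inl hbot
      · obtain ⟨⟨g, hgM⟩, hg1⟩ := Subgroup.ne_bot_iff_exists_ne_one.1 hbot
        refine Or.inr (Or.inl (le_antisymm hle fun v hv => ?_))
        rcases isConj_of_mem_klein g v (hle hgM) (by simpa using hg1) hv with rfl | ⟨h, rfl⟩
        · exact M.one_mem
        · exact hM.conj_mem _ hgM h
    · obtain ⟨g, hgM, hgk⟩ := SetLike.not_le_iff_exists.1 hle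
      obtain ⟨h, x, y, z, hxy, hxz, hyz, he⟩ := exists_commutator_four g hgk
      refine Or.inr (Or.inr ?_)
      rw [← alternatingGroup_eq_sign_ker]
      refine alternatingGroup_le_of_isThreeCycle hM (isThreeCycle_swap_mul_swap_same hxy hxz hyz) ?_
      rw [← he, mul_assoc, mul_assoc, ← mul_assoc h]
      exact M.mul_mem hgM (hM.conj_mem _ (M.inv_mem hgM) h)
  mem_of_commutator_mem := by
    intro g hg
    by_contra hgk
    obtain ⟨h, x, y, z, hxy, hxz, hyz, he⟩ := exists_commutator_four g hgk
    have h1 := hg h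
    rw [he, mem_klein] at h1
    -- a three-cycle has order three, hence is not an involution
    have h3 : (swap x y * swap x z).cycleType = {3} := isThreeCycle_swap_mul_swap_same hxy hxz hyz
    have h2 := orderOf_dvd_of_pow_eq_one (n := 2) (x := swap x y * swap x z) (by rw [pow_two]; exact h1.1)
    rw [← lcm_cycleType, h3] at h2
    simp at h2
  eq_one_of_commutator_eq_one := perm_eq_one_of_commutator (by norm_num)

/-- For `k ≠ 4` every nontrivial normal subgroup of `S_k` contains the alternating group. -/
theorem isLocalFactor_bot {k : ℕ} (hk : 3 ≤ k) (hk4 : k ≠ 4) :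
    IsLocalFactor (sign : Perm (Fin k) →* ℤˣ) ⊥ where
  surj := by
    have : Nontrivial (Fin k) := Fin.nontrivial_iff_two_le.2 (by omega)
    exact sign_surjective _
  normal := inferInstance
  le_ker := bot_le
  not_ker_le := by
    intro h
    have h1 : Nontrivial (alternatingGroup (Fin k)) :=
      alternatingGroup.nontrivial_of_three_le_card (by simpa using hk)
    rw [Subgroup.nontrivial_iff_ne_bot] at h1
    exact h1 (le_bot_iff.1 h)
  cases_of_normal := by
    intro M hM
    by_cases hbot : M = ⊥
    · exact Or.inl hbot
    refine Or.inr (Or.inr ?_)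
    rw [← alternatingGroup_eq_sign_ker]
    rcases hk.eq_or_lt with rfl | hlt
    · obtain ⟨⟨g, hgM⟩, hg1⟩ := Subgroup.ne_bot_iff_exists_ne_one.1 hbot
      obtain ⟨h, x, y, z, hxy, hxz, hyz, he⟩ := exists_commutator_three g (by simpa using hg1)
      refine alternatingGroup_le_of_isThreeCycle hM (isThreeCycle_swap_mul_swap_same hxy hxz hyz) ?_
      rw [← he, mul_assoc, mul_assoc, ← mul_assoc h]
      exact M.mul_mem hgM (hM.conj_mem _ (M.inv_mem hgM) h)
    · exact alternatingGroup_le_of_normal (by simp; omega) ((Subgroup.nontrivial_iff_ne_bot M).2 hbot)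
  mem_of_commutator_mem := fun g hg => perm_eq_one_of_commutator hk g hg
  eq_one_of_commutator_eq_one := perm_eq_one_of_commutator hk

end SymmetricGroup

/-! ### The combinatorial model of the lattice -/

/-- The combinatorial model of the normal subgroup lattice of a product of factors indexed by `I`,
where `F` singles out the `S_4` factors. An element is a triple `(T, U, W)`: `U` is the set of
factors met nontrivially, `T` the set of factors whose alternating group is contained in the normal
subgroup, and `W` the group of sign vectors of its elements. The sign group is written
multiplicatively, with values in `ℤˣ`. -/
abbrev Model {I : Type*} (F : I → Prop) :=
  {p : Set I × Set I × Subgroup (I → ℤˣ) //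
    p.1 ⊆ p.2.1 ∧ (∀ i ∈ p.2.1, i ∉ p.1 → F i) ∧ ∀ w ∈ p.2.2, ∀ i, w i ≠ 1 → i ∈ p.1}

namespace Model

variable {I : Type*} {F : I → Prop}

/-- The indices of the factors contributing at least their alternating group. -/
def T (p : Model F) : Set I := p.1.1

/-- The indices of the factors contributing nontrivially. -/
def U (p : Model F) : Set I := p.1.2.1

/-- The group of sign vectors. -/
def W (p : Model F) : Subgroup (I → ℤˣ) := p.1.2.2

theorem T_subset_U (p : Model F) : p.T ⊆ p.U := p.2.1
theorem F_of_mem (p : Model F) {i : I} (hU : i ∈ p.U) (hT : i ∉ p.T) : F i := p.2.2.1 i hU hT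
theorem mem_T_of_mem_W (p : Model F) {w : I → ℤˣ} (hw : w ∈ p.W) {i : I} (hi : w i ≠ 1) :
    i ∈ p.T := p.2.2.2 w hw i hi

theorem le_def {p q : Model F} : p ≤ q ↔ p.T ⊆ q.T ∧ p.U ⊆ q.U ∧ p.W ≤ q.W := Iff.rfl

@[ext] theorem ext {p q : Model F} (hT : p.T = q.T) (hU : p.U = q.U) (hW : p.W = q.W) : p = q :=
  Subtype.ext (Prod.ext hT (Prod.ext hU hW))

instance : OrderBot (Model F) where
  bot := ⟨(∅, ∅, ⊥), by simp⟩
  bot_le p := ⟨Set.empty_subset _, Set.empty_subset _, bot_le⟩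

instance [Finite I] : Finite (Model F) := inferInstance

theorem eq_bot_of_U {p : Model F} (h : p.U = ∅) : p = ⊥ := by
  have hT : p.T = ∅ := Set.subset_eq_empty p.T_subset_U h
  refine ext hT h ((Subgroup.eq_bot_iff_forall _).2 fun w hw => ?_)
  funext i
  by_contra hi
  exact (hT ▸ p.mem_T_of_mem_W hw hi : i ∈ (∅ : Set I))

/-- The least element with `i ∈ U`: the Klein four-group of an `S_4` factor, the alternating group
of any other factor. -/
def atom (i : I) : Model F :=
  ⟨({j | j = i ∧ ¬ F i}, {i}, ⊥), by
    refine ⟨fun j hj => hj.1, ?_, ?_⟩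
    · rintro j rfl hj
      by_contra h
      exact hj ⟨rfl, h⟩
    · rintro w hw j hj
      rw [Subgroup.mem_bot.1 hw] at hj
      exact absurd rfl hj⟩

/-- The least element with `i ∈ T`: the alternating group of the factor `i`. It equals `atom i`
unless `F i`. -/
def mid (i : I) : Model F :=
  ⟨({i}, {i}, ⊥), by
    refine ⟨subset_rfl, fun j hj hj' => absurd hj hj', ?_⟩
    rintro w hw j hj
    rw [Subgroup.mem_bot.1 hw] at hj
    exact absurd rfl hj⟩

/-- The least element whose sign group contains `w`. -/
def line (w : I → ℤˣ) : Model F :=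
  ⟨({i | w i ≠ 1}, {i | w i ≠ 1}, Subgroup.zpowers w), by
    refine ⟨subset_rfl, fun j hj hj' => absurd hj hj', ?_⟩
    rintro _ ⟨n, rfl⟩ j hj hw
    exact hj (by simp [hw])⟩

theorem atom_le {i : I} {p : Model F} : atom i ≤ p ↔ i ∈ p.U := by
  refine ⟨fun h => h.2.1 rfl, fun h => ⟨?_, Set.singleton_subset_iff.2 h, bot_le⟩⟩
  rintro j ⟨rfl, hj⟩
  by_contra hT
  exact hj (p.F_of_mem h hT)

theorem mid_le {i : I} {p : Model F} : mid i ≤ p ↔ i ∈ p.T :=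
  ⟨fun h => h.1 rfl, fun h => ⟨Set.singleton_subset_iff.2 h,
    Set.singleton_subset_iff.2 (p.T_subset_U h), bot_le⟩⟩

theorem line_le {w : I → ℤˣ} {p : Model F} : line w ≤ p ↔ w ∈ p.W :=
  ⟨fun h => h.2.2 (Subgroup.mem_zpowers w), fun h => ⟨fun _ hi => p.mem_T_of_mem_W h hi,
    fun _ hi => p.T_subset_U (p.mem_T_of_mem_W h hi), (Subgroup.zpowers_le).2 h⟩⟩

theorem atom_injective : Function.Injective (atom : I → Model F) := fun _ _ h =>
  Set.singleton_injective (congrArg U h)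

theorem isAtom_iff {p : Model F} : IsAtom p ↔ ∃ i, p = atom i := by
  constructor
  · intro h
    have hU : p.U.Nonempty := by
      rw [Set.nonempty_iff_ne_empty]
      exact fun h' => h.1 (eq_bot_of_U h')
    obtain ⟨i, hi⟩ := hU
    refine ⟨i, ((h.le_iff.1 (atom_le.2 hi)).resolve_left ?_).symm⟩
    intro h'
    exact Set.singleton_ne_empty i (congrArg U h')
  · rintro ⟨i, rfl⟩
    refine ⟨fun h' => Set.singleton_ne_empty i (congrArg U h'), fun q hq => ?_⟩
    by_contra hq0
    have hU : q.U.Nonempty := by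
      rw [Set.nonempty_iff_ne_empty]
      exact fun h' => hq0 (eq_bot_of_U h')
    obtain ⟨j, hj⟩ := hU
    obtain rfl : j = i := hq.le.2.1 hj
    exact hq.not_ge (atom_le.2 hj)

/-- The elements `atom i`, `mid i`, `line w`, which generate the lattice under joins; apart from
`line 1 = ⊥` they are its join-irreducible elements. -/
inductive IsGen : Model F → Prop
  | atom (i : I) : IsGen (atom i)
  | mid (i : I) : IsGen (mid i)
  | line (w : I → ℤˣ) : IsGen (line w)

theorem le_of_forall_gen {p q : Model F} (h : ∀ j, IsGen j → j ≤ p → j ≤ q) : p ≤ q :=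
  ⟨fun i hi => mid_le.1 (h _ (.mid i) (mid_le.2 hi)),
    fun i hi => atom_le.1 (h _ (.atom i) (atom_le.2 hi)),
    fun w hw => line_le.1 (h _ (.line w) (line_le.2 hw))⟩

/-- Generators with the same support `U` form a chain: a sign vector is determined by its support,
so a support with at least two elements occurs once, and over `{i}` there are only
`atom i ≤ mid i ≤ line w`. -/
theorem gen_comparable {p q : Model F} (hp : IsGen p) (hq : IsGen q) (h : p.U = q.U) :
    p ≤ q ∨ q ≤ p := by
  have hat : ∀ (i : I) (r : Model F), (atom i : Model F).U = r.U → atom i ≤ r := fun _ _ h =>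
    atom_le.2 (h ▸ rfl)
  have hmid : ∀ (i : I) (w : I → ℤˣ), (mid i : Model F).U = (line w).U →
      (mid i : Model F) ≤ line w := fun i w h =>
    mid_le.2 (show i ∈ (line w : Model F).U from h ▸ rfl)
  cases hp with
  | atom i => exact Or.inl (hat i q h)
  | mid i =>
    cases hq with
    | atom j => exact Or.inr (hat j _ h.symm)
    | mid j =>
      obtain rfl : i = j := Set.singleton_injective h
      exact Or.inl le_rfl
    | line w => exact Or.inl (hmid i w h)
  | line w =>
    cases hq with
    | atom j => exact Or.inr (hat j _ h.symm)
    | mid j => exact Or.inr (hmid j w h.symm)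
    | line v =>
      obtain rfl : w = v := by
        funext i
        have hi : w i ≠ 1 ↔ v i ≠ 1 := Set.ext_iff.1 h i
        rcases Int.units_eq_one_or (w i) with h1 | h1 <;>
          rcases Int.units_eq_one_or (v i) with h2 | h2 <;> simp_all
      exact Or.inl le_rfl

/-- An automorphism fixing all atoms is trivial. A minimal `p` that is moved has the same elements
strictly below it as its image, and is incomparable to it; hence both are generators, with the same
atoms below them, contradicting `gen_comparable`. -/
theorem aut_eq_one [Finite I] (ψ : Model F ≃o Model F) (hψ : ∀ i, ψ (atom i) = atom i) :
    ψ = 1 := by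
  have hU : ∀ p, (ψ p).U = p.U := by
    intro p
    ext i
    rw [← atom_le, ← atom_le]
    nth_rw 1 [← hψ i]
    exact ψ.le_iff_le
  ext1
  funext p
  change ψ p = p
  induction p using WellFoundedLT.induction with
  | ind p ih =>
    by_contra hne
    have hlt : ∀ q, q < p → q < ψ p := fun q hq => by
      rw [← ih q hq]; exact ψ.lt_iff_lt.2 hq
    have hlt' : ∀ q, q < ψ p → q < p := fun q hq => by
      have h1 : ψ.symm q < p := by rwa [← ψ.lt_iff_lt, ψ.apply_symm_apply]
      have h2 := ih _ h1
      rw [ψ.apply_symm_apply] at h2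
      rwa [← h2] at h1
    have hpq : ¬ p ≤ ψ p := fun h => lt_irrefl _ (hlt' p (h.lt_of_ne (Ne.symm hne)))
    have hqp : ¬ ψ p ≤ p := fun h => lt_irrefl _ (hlt _ (h.lt_of_ne hne))
    have key : ∀ x y : Model F, (∀ q, q < x → q < y) → ¬ x ≤ y → IsGen x := fun x y h hxy => by
      by_contra hx
      refine hxy (le_of_forall_gen fun j hj hjx => (h j (hjx.lt_of_ne ?_)).le)
      rintro rfl
      exact hx hj
    exact (gen_comparable (key _ _ hlt hpq) (key _ _ hlt' hqp) (hU p).symm).elim hpq hqp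

/-- An order-theoretic description of `F`: the elements lying above `atom i` and above no other atom
form a chain with three elements if `F i`, and with two elements otherwise. -/
theorem F_iff (i : I) : F i ↔
    ∃ x y : Model F, atom i < x ∧ x < y ∧ ∀ j, atom j ≤ y → j = i := by
  classical
  constructor
  · intro hF
    let w : I → ℤˣ := Pi.mulSingle i (-1)
    have hw : ∀ j, w j ≠ 1 ↔ j = i := by
      intro j
      by_cases hj : j = i
      · subst hj; simp [w]
      · simp [w, hj]
    refine ⟨mid i, line w, lt_of_le_not_ge (atom_le.2 rfl) ?_, lt_of_le_not_ge (mid_le.2 ?_) ?_, ?_⟩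
    · rw [mid_le]
      exact fun h => h.2 hF
    · exact (hw i).2 rfl
    · rw [line_le]
      intro h
      exact (hw i).2 rfl (congrFun (Subgroup.mem_bot.1 h) i)
    · intro j hj
      exact (hw j).1 (atom_le.1 hj)
  · rintro ⟨x, y, hx, hxy, hy⟩
    by_contra hF
    have hyU : ∀ j ∈ y.U, j = i := fun j hj => hy j (atom_le.2 hj)
    have hT : i ∈ x.T := by
      by_contra h
      exact hF (x.F_of_mem (atom_le.1 hx.le) h)
    have hT' : i ∈ y.T := hxy.le.1 hT
    -- since `x ≠ atom i`, `x.W` is nontrivial, so it contains every sign vector supported on `{i}`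
    refine hx.not_ge ⟨?_, ?_, ?_⟩
    · intro j hj
      exact ⟨hyU j (y.T_subset_U (hxy.le.1 hj)), hF⟩
    · intro j hj
      exact hyU j (hxy.le.2.1 hj)
    · intro w hw
      by_contra hw1
      refine hxy.not_ge ⟨?_, ?_, ?_⟩
      · intro j hj
        rwa [hyU j (y.T_subset_U hj)]
      · intro j hj
        rw [hyU j hj]
        exact x.T_subset_U hT
      · intro v hv
        have hsupp : ∀ u ∈ y.W, ∀ j, j ≠ i → u j = 1 := fun u hu j hj => by
          by_contra h
          exact hj (hyU j (y.T_subset_U (y.mem_T_of_mem_W hu h)))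
        by_cases hvi : v i = 1
        · have : v = 1 := by
            funext j
            by_cases hj : j = i
            · rw [hj]; exact hvi
            · exact hsupp v hv j hj
          rw [this]
          exact x.W.one_mem
        · have hwi : w i ≠ 1 := by
            intro h
            refine hw1 (Subgroup.mem_bot.2 ?_)
            funext j
            by_cases hj : j = i
            · rw [hj]; exact h
            · exact hsupp w (hxy.le.2.2 hw) j hj
          have : v = w := by
            funext j
            by_cases hj : j = i
            · rw [hj, Int.units_ne_iff_eq_neg.1 hvi, Int.units_ne_iff_eq_neg.1 hwi]
            · rw [hsupp v hv j hj, hsupp w (hxy.le.2.2 hw) j hj]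
          rwa [this]

/-- The action on the model of a permutation of the factors preserving `F`. -/
def reindex (σ : Equiv.Perm I) (hσ : ∀ i, F (σ i) ↔ F i) (p : Model F) : Model F :=
  ⟨({i | σ.symm i ∈ p.T}, {i | σ.symm i ∈ p.U},
      p.W.comap (MonoidHom.pi fun i => Pi.evalMonoidHom (fun _ => ℤˣ) (σ i))), by
    refine ⟨fun i hi => p.T_subset_U hi, fun i hi hi' => ?_, fun w hw i hi => ?_⟩
    · have := (hσ _).2 (p.F_of_mem hi hi')
      rwa [σ.apply_symm_apply] at this
    · refine p.mem_T_of_mem_W hw (i := σ.symm i) ?_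
      change w (σ (σ.symm i)) ≠ 1
      rwa [σ.apply_symm_apply]⟩

variable {σ : Equiv.Perm I} {hσ : ∀ i, F (σ i) ↔ F i}

theorem mem_U_reindex {p : Model F} {i : I} : i ∈ (reindex σ hσ p).U ↔ σ.symm i ∈ p.U := Iff.rfl

theorem reindex_mono : Monotone (reindex σ hσ) := fun _ _ h =>
  ⟨fun _ hi => h.1 hi, fun _ hi => h.2.1 hi, fun _ hi => h.2.2 hi⟩

theorem reindex_reindex {τ : Equiv.Perm I} {hτ : ∀ i, F (τ i) ↔ F i}
    (h : ∀ i, F ((σ * τ) i) ↔ F i) (p : Model F) :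
    reindex σ hσ (reindex τ hτ p) = reindex (σ * τ) h p := rfl

theorem reindex_eq_self (h : σ = 1) (p : Model F) : reindex σ hσ p = p := by subst h; rfl

theorem reindex_congr {τ : Equiv.Perm I} {hτ : ∀ i, F (τ i) ↔ F i} (h : σ = τ) (p : Model F) :
    reindex σ hσ p = reindex τ hτ p := by subst h; rfl

theorem perm_symm (hσ : ∀ i, F (σ i) ↔ F i) (i : I) : F (σ.symm i) ↔ F i := by
  rw [← hσ, Equiv.apply_symm_apply]

theorem reindex_symm_reindex (p : Model F) :
    reindex σ.symm (perm_symm hσ) (reindex σ hσ p) = p := by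
  have h : σ.symm * σ = 1 := inv_mul_cancel σ
  rw [reindex_reindex (by rw [h]; exact fun _ => Iff.rfl), reindex_eq_self h]

theorem reindex_reindex_symm (p : Model F) :
    reindex σ hσ (reindex σ.symm (perm_symm hσ) p) = p := by
  have h : σ * σ.symm = 1 := mul_inv_cancel σ
  rw [reindex_reindex (by rw [h]; exact fun _ => Iff.rfl), reindex_eq_self h]

/-- The lattice automorphism of the model induced by a permutation of the factors. -/
def reindexIso (σ : Equiv.Perm I) (hσ : ∀ i, F (σ i) ↔ F i) : Model F ≃o Model F where
  toFun := reindex σ hσ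
  invFun := reindex σ.symm (perm_symm hσ)
  left_inv := reindex_symm_reindex
  right_inv := reindex_reindex_symm
  map_rel_iff' {p q} := by
    refine ⟨fun h => ?_, fun h => reindex_mono (hσ := hσ) h⟩
    rw [← reindex_symm_reindex (hσ := hσ) p, ← reindex_symm_reindex (hσ := hσ) q]
    exact reindex_mono (hσ := perm_symm hσ) h

theorem reindex_atom (i : I) : reindex σ hσ (atom i) = atom (σ i) := by
  refine le_antisymm ?_ (atom_le.2 ?_)
  · rw [← reindex_reindex_symm (hσ := hσ) (atom (σ i))]
    refine reindex_mono (atom_le.2 ?_)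
    rw [mem_U_reindex]
    exact rfl
  · rw [mem_U_reindex, Equiv.symm_apply_apply]
    exact rfl

/-- Every automorphism of the model is induced by its permutation of the atoms. -/
theorem exists_perm [Finite I] (φ : Model F ≃o Model F) :
    ∃ (σ : Equiv.Perm I) (hσ : ∀ i, F (σ i) ↔ F i), φ = reindexIso σ hσ := by
  have h1 : ∀ i, ∃ j, φ (atom i) = atom j := fun i =>
    isAtom_iff.1 ((φ.isAtom_iff _).2 (isAtom_iff.2 ⟨i, rfl⟩))
  choose f hf using h1
  have hinj : Function.Injective f := fun i j h =>
    atom_injective (φ.injective ((hf i).trans ((congrArg atom h).trans (hf j).symm)))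
  let σ : Equiv.Perm I := Equiv.ofBijective f (Finite.injective_iff_bijective.1 hinj)
  have hσφ : ∀ i, φ (atom i) = atom (σ i) := hf
  have hσ : ∀ i, F (σ i) ↔ F i := by
    intro i
    rw [F_iff (F := F) (σ i), F_iff (F := F) i]
    constructor
    · rintro ⟨x, y, hx, hxy, hy⟩
      refine ⟨φ.symm x, φ.symm y, ?_, φ.symm.lt_iff_lt.2 hxy, fun j hj => ?_⟩
      · rwa [← φ.lt_iff_lt, φ.apply_symm_apply, hσφ]
      · rw [← φ.le_iff_le, φ.apply_symm_apply, hσφ] at hj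
        exact σ.injective (hy _ hj)
    · rintro ⟨x, y, hx, hxy, hy⟩
      refine ⟨φ x, φ y, ?_, φ.lt_iff_lt.2 hxy, fun j hj => ?_⟩
      · rwa [← hσφ, φ.lt_iff_lt]
      · obtain ⟨j, rfl⟩ := σ.surjective j
        rw [← hσφ, φ.le_iff_le] at hj
        rw [hy _ hj]
  refine ⟨σ, hσ, ?_⟩
  have h2 : (reindexIso σ hσ)⁻¹ * φ = 1 := by
    refine aut_eq_one _ fun i => ?_
    change (reindexIso σ hσ).symm (φ (atom i)) = atom i
    rw [hσφ, OrderIso.symm_apply_eq]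
    exact (reindex_atom (hσ := hσ) i).symm
  exact (inv_mul_eq_one.1 h2).symm

end Model

/-- The predicate on a disjoint union selecting the left summand. -/
def IsLeft {α β : Type*} (x : α ⊕ β) : Prop := x.isLeft = true

theorem isLeft_sumCongr {α β : Type*} (q : Equiv.Perm α × Equiv.Perm β) (x : α ⊕ β) :
    IsLeft (Equiv.Perm.sumCongrHom α β q x) ↔ IsLeft x := by
  cases x <;> simp [IsLeft]

/-- The action of `Perm α × Perm β` on the model indexed by `α ⊕ β`, with `α` indexing the `S_4`
factors. -/
def modelAutHom (α β : Type*) :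
    Equiv.Perm α × Equiv.Perm β →* (Model (IsLeft : α ⊕ β → Prop) ≃o Model (IsLeft : α ⊕ β → Prop))
    where
  toFun q := Model.reindexIso (Equiv.Perm.sumCongrHom α β q) (isLeft_sumCongr q)
  map_one' := by
    ext1
    funext p
    exact Model.reindex_eq_self (hσ := isLeft_sumCongr 1) (map_one _) p
  map_mul' q r := by
    ext1
    funext p
    refine (Model.reindex_congr (hσ := isLeft_sumCongr (q * r)) (map_mul _ _ _) p).trans
      (Model.reindex_reindex (hσ := isLeft_sumCongr q) (hτ := isLeft_sumCongr r) ?_ p).symm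
    rw [← map_mul]
    exact isLeft_sumCongr (q * r)

theorem modelAutHom_bijective (α β : Type*) [Finite α] [Finite β] :
    Function.Bijective (modelAutHom α β) := by
  constructor
  · intro q r h
    refine Equiv.Perm.sumCongrHom_injective (Equiv.ext fun i => ?_)
    apply Model.atom_injective (F := (IsLeft : α ⊕ β → Prop))
    rw [← Model.reindex_atom (hσ := isLeft_sumCongr q),
      ← Model.reindex_atom (hσ := isLeft_sumCongr r)]
    exact DFunLike.congr_fun h (Model.atom i)
  · intro φ
    obtain ⟨σ, hσ, rfl⟩ := Model.exists_perm φ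
    obtain ⟨q, rfl⟩ : σ ∈ (Equiv.Perm.sumCongrHom α β).range := by
      refine Equiv.Perm.mem_sumCongrHom_range_of_perm_mapsTo_inl ?_
      rintro _ ⟨x, rfl⟩
      have := (hσ (Sum.inl x)).2 rfl
      obtain ⟨y, hy⟩ := Sum.isLeft_iff.1 this
      exact ⟨y, hy.symm⟩
    exact ⟨q, rfl⟩

/-! ### Normal subgroups of a product -/

variable {I : Type*} {H : I → Type*} [∀ i, Group (H i)]

/-- The vector of signs of an element of the product. -/
def signs (s : ∀ i, H i →* ℤˣ) : (∀ i, H i) →* (I → ℤˣ) :=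
  MonoidHom.pi fun i => (s i).comp (Pi.evalMonoidHom H i)

theorem signs_apply (s : ∀ i, H i →* ℤˣ) (g : ∀ i, H i) (i : I) : signs s g i = s i (g i) := rfl

variable [DecidableEq I]

/-- The intersection of `N` with the factor `i`, as a subgroup of `H i`. -/
def slice (N : Subgroup (∀ i, H i)) (i : I) : Subgroup (H i) :=
  N.comap (MonoidHom.mulSingle H i)

theorem mem_slice {N : Subgroup (∀ i, H i)} {i : I} {h : H i} :
    h ∈ slice N i ↔ Pi.mulSingle i h ∈ N := Iff.rfl

theorem slice_normal {N : Subgroup (∀ i, H i)} (hN : N.Normal) (i : I) : (slice N i).Normal :=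
  hN.comap _

/-- The commutator of `g ∈ N` with an element of the factor `i` lies in `N` and in the factor `i`. -/
theorem commutator_mem_slice {N : Subgroup (∀ i, H i)} (hN : N.Normal) {g : ∀ i, H i}
    (hg : g ∈ N) (i : I) (h : H i) : g i * h * (g i)⁻¹ * h⁻¹ ∈ slice N i := by
  have h1 : g * (Pi.mulSingle i h * g⁻¹ * (Pi.mulSingle i h)⁻¹) ∈ N :=
    N.mul_mem hg (hN.conj_mem _ (N.inv_mem hg) _)
  rw [mem_slice]
  convert h1 using 1
  funext j
  by_cases hj : j = i
  · subst hj
    simp [mul_assoc]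
  · simp [hj]

variable {s : ∀ i, H i →* ℤˣ} {V : ∀ i, Subgroup (H i)}

/-- The factors whose alternating group is contained in `N`. -/
def topSet (s : ∀ i, H i →* ℤˣ) (N : Subgroup (∀ i, H i)) : Set I :=
  {i | (s i).ker ≤ slice N i}

/-- The factors that `N` meets nontrivially. -/
def supp (N : Subgroup (∀ i, H i)) : Set I := {i | slice N i ≠ ⊥}

theorem apply_eq_one (hL : ∀ i, IsLocalFactor (s i) (V i)) {N : Subgroup (∀ i, H i)}
    (hN : N.Normal) {g : ∀ i, H i} (hg : g ∈ N) {i : I} (hi : i ∉ supp N) : g i = 1 := by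
  refine (hL i).eq_one_of_commutator_eq_one _ fun h => ?_
  have h1 := commutator_mem_slice hN hg i h
  rwa [not_not.1 hi, Subgroup.mem_bot] at h1

theorem slice_eq (hL : ∀ i, IsLocalFactor (s i) (V i)) {N : Subgroup (∀ i, H i)}
    (hN : N.Normal) {i : I} (hi : i ∉ topSet s N) (hi' : i ∈ supp N) : slice N i = V i :=
  (((hL i).cases_of_normal _ (slice_normal hN i)).resolve_left hi').resolve_right hi

theorem apply_mem (hL : ∀ i, IsLocalFactor (s i) (V i)) {N : Subgroup (∀ i, H i)}
    (hN : N.Normal) {g : ∀ i, H i} (hg : g ∈ N) {i : I} (hi : i ∉ topSet s N) : g i ∈ V i := by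
  by_cases hi' : i ∈ supp N
  · refine (hL i).mem_of_commutator_mem _ fun h => ?_
    rw [← slice_eq hL hN hi hi']
    exact commutator_mem_slice hN hg i h
  · rw [apply_eq_one hL hN hg hi']
    exact (V i).one_mem

/-- A normal subgroup is determined by its slices (through `supp` and `topSet`) and its group of sign
vectors. -/
theorem mem_iff [Finite I] (hL : ∀ i, IsLocalFactor (s i) (V i)) {N : Subgroup (∀ i, H i)}
    (hN : N.Normal) (g : ∀ i, H i) :
    g ∈ N ↔ (∀ i ∉ supp N, g i = 1) ∧ (∀ i ∉ topSet s N, g i ∈ V i) ∧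
      signs s g ∈ N.map (signs s) := by
  refine ⟨fun hg => ⟨fun i hi => apply_eq_one hL hN hg hi, fun i hi => apply_mem hL hN hg hi,
    Subgroup.mem_map_of_mem _ hg⟩, ?_⟩
  rintro ⟨hU, hT, n, hn, hng⟩
  -- `g` and `n ∈ N` have the same signs; the quotient lies in the product of the slices of `N`
  suffices h : g * n⁻¹ ∈ N by simpa using N.mul_mem h hn
  refine Subgroup.pi_mem_of_mulSingle_mem _ fun i => ?_
  change g i * (n i)⁻¹ ∈ slice N i
  by_cases hiT : i ∈ topSet s N
  · refine hiT ?_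
    rw [MonoidHom.mem_ker, map_mul, map_inv, mul_inv_eq_one]
    exact (congrFun hng i).symm
  · by_cases hiU : i ∈ supp N
    · rw [slice_eq hL hN hiT hiU]
      exact (V i).mul_mem (hT i hiT) ((V i).inv_mem (apply_mem hL hN hn hiT))
    · rw [hU i hiU, apply_eq_one hL hN hn hiU]
      simp

theorem ker_ne_bot {K : Type*} [Group K] {t : K →* ℤˣ} {Y : Subgroup K} (h : IsLocalFactor t Y) :
    t.ker ≠ ⊥ := fun h' => h.not_ker_le (h' ▸ bot_le)

/-- The triple of a normal subgroup. -/
def toModel (hL : ∀ i, IsLocalFactor (s i) (V i)) (N : NormalSubgroupLattice (∀ i, H i)) :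
    Model (fun i => V i ≠ ⊥) :=
  ⟨(topSet s N.1, supp N.1, N.1.map (signs s)), by
    refine ⟨fun i hi h => ?_, fun i hi hi' h => ?_, ?_⟩
    · exact ker_ne_bot (hL i) (le_bot_iff.1 (h ▸ hi : (s i).ker ≤ ⊥))
    · exact hi ((slice_eq hL N.2 hi' hi).trans h)
    · rintro _ ⟨n, hn, rfl⟩ i hi
      by_contra hT
      exact hi ((hL i).le_ker (apply_mem hL N.2 hn hT))⟩

/-- The normal subgroup of a triple `(T, U, W)`: the elements trivial outside `U`, in `V` outside `T`,
with sign vector in `W`. -/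
def ofModel (hL : ∀ i, IsLocalFactor (s i) (V i)) (p : Model (fun i => V i ≠ ⊥)) :
    NormalSubgroupLattice (∀ i, H i) :=
  ⟨{ carrier := {g | (∀ i ∉ p.U, g i = 1) ∧ (∀ i ∉ p.T, g i ∈ V i) ∧ signs s g ∈ p.W}
     mul_mem' := by
      rintro a b ⟨ha1, ha2, ha3⟩ ⟨hb1, hb2, hb3⟩
      refine ⟨fun i hi => ?_, fun i hi => (V i).mul_mem (ha2 i hi) (hb2 i hi), ?_⟩
      · rw [Pi.mul_apply, ha1 i hi, hb1 i hi, one_mul]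
      · rw [map_mul]
        exact mul_mem ha3 hb3
     one_mem' := ⟨fun _ _ => rfl, fun i _ => (V i).one_mem, by
      rw [map_one]
      exact one_mem _⟩
     inv_mem' := by
      rintro a ⟨ha1, ha2, ha3⟩
      refine ⟨fun i hi => ?_, fun i hi => (V i).inv_mem (ha2 i hi), ?_⟩
      · rw [Pi.inv_apply, ha1 i hi, inv_one]
      · rw [map_inv]
        exact inv_mem ha3 }, by
    refine ⟨?_⟩
    rintro a ⟨ha1, ha2, ha3⟩ b
    refine ⟨fun i hi => ?_, fun i hi => (hL i).normal.conj_mem _ (ha2 i hi) _, ?_⟩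
    · simp [ha1 i hi]
    · rw [map_mul, map_mul, map_inv, mul_comm, inv_mul_cancel_left]
      exact ha3⟩

omit [DecidableEq I] in
theorem mem_ofModel {hL : ∀ i, IsLocalFactor (s i) (V i)} {p : Model (fun i => V i ≠ ⊥)}
    {g : ∀ i, H i} : g ∈ (ofModel hL p).1 ↔
      (∀ i ∉ p.U, g i = 1) ∧ (∀ i ∉ p.T, g i ∈ V i) ∧ signs s g ∈ p.W := Iff.rfl

theorem mulSingle_mem_ofModel {hL : ∀ i, IsLocalFactor (s i) (V i)}
    {p : Model (fun i => V i ≠ ⊥)} {i : I} {h : H i} (hs : s i h = 1) :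
    h ∈ slice (ofModel hL p).1 i ↔ (i ∉ p.U → h = 1) ∧ (i ∉ p.T → h ∈ V i) := by
  rw [mem_slice, mem_ofModel]
  constructor
  · rintro ⟨h1, h2, -⟩
    exact ⟨fun hi => by simpa using h1 i hi, fun hi => by simpa using h2 i hi⟩
  · rintro ⟨h1, h2⟩
    refine ⟨fun j hj => ?_, fun j hj => ?_, ?_⟩
    · by_cases hji : j = i
      · subst hji; simpa using h1 hj
      · simp [hji]
    · by_cases hji : j = i
      · subst hji; simpa using h2 hj
      · simp [hji]
    · convert p.W.one_mem
      funext j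
      rw [signs_apply]
      by_cases hji : j = i
      · subst hji; simpa using hs
      · simp [hji]

theorem toModel_ofModel (hL : ∀ i, IsLocalFactor (s i) (V i)) (p : Model (fun i => V i ≠ ⊥)) :
    toModel hL (ofModel hL p) = p := by
  refine Model.ext ?_ ?_ ?_
  · ext i
    change (s i).ker ≤ slice (ofModel hL p).1 i ↔ i ∈ p.T
    constructor
    · intro h
      by_contra hi
      exact (hL i).not_ker_le fun x hx => ((mulSingle_mem_ofModel hx).1 (h hx)).2 hi
    · exact fun hi x hx =>
        (mulSingle_mem_ofModel hx).2 ⟨fun h => absurd (p.T_subset_U hi) h, fun h => absurd hi h⟩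
  · ext i
    change slice (ofModel hL p).1 i ≠ ⊥ ↔ i ∈ p.U
    constructor
    · intro h
      by_contra hi
      refine h ((Subgroup.eq_bot_iff_forall _).2 fun x hx => ?_)
      simpa using (mem_ofModel.1 (mem_slice.1 hx)).1 i hi
    · intro hi h
      -- the slice contains `ker s` or the nontrivial `V`, according to the level
      by_cases hT : i ∈ p.T
      · refine ker_ne_bot (hL i) (le_bot_iff.1 (h ▸ fun x hx => ?_))
        exact (mulSingle_mem_ofModel hx).2 ⟨fun h => absurd hi h, fun h => absurd hT h⟩
      · refine p.F_of_mem hi hT (le_bot_iff.1 (h ▸ fun x hx => ?_))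
        exact (mulSingle_mem_ofModel ((hL i).le_ker hx)).2 ⟨fun h => absurd hi h, fun _ => hx⟩
  · change (ofModel hL p).1.map (signs s) = p.W
    refine le_antisymm ?_ fun w hw => ?_
    · rintro _ ⟨g, hg, rfl⟩
      exact hg.2.2
    · -- lift `w` to an element that is trivial wherever `w` is
      have hex : ∀ i, ∃ x : H i, s i x = w i ∧ (w i = 1 → x = 1) := fun i => by
        by_cases hi : w i = 1
        · exact ⟨1, by rw [map_one, hi], fun _ => rfl⟩
        · obtain ⟨x, hx⟩ := (hL i).surj (w i)
          exact ⟨x, hx, fun h => absurd h hi⟩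
      choose g hg hg1 using hex
      have hgw : signs s g = w := funext hg
      have hout : ∀ i ∉ p.T, g i = 1 := fun i hi =>
        hg1 i (not_not.1 fun h => hi (p.mem_T_of_mem_W hw h))
      refine ⟨g, ⟨fun i hi => hout i fun h => hi (p.T_subset_U h), fun i hi => ?_, ?_⟩, hgw⟩
      · rw [hout i hi]
        exact (V i).one_mem
      · rwa [hgw]

theorem ofModel_toModel [Finite I] (hL : ∀ i, IsLocalFactor (s i) (V i))
    (N : NormalSubgroupLattice (∀ i, H i)) : ofModel hL (toModel hL N) = N :=
  Subtype.ext (Subgroup.ext fun g => (mem_iff hL N.2 g).symm)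

theorem toModel_mono (hL : ∀ i, IsLocalFactor (s i) (V i)) : Monotone (toModel hL) :=
  fun _ _ h => ⟨fun _ hi => hi.trans (Subgroup.comap_mono h),
    fun _ hi hi' => hi (le_bot_iff.1 (hi' ▸ Subgroup.comap_mono h)), Subgroup.map_mono h⟩

omit [DecidableEq I] in
theorem ofModel_mono (hL : ∀ i, IsLocalFactor (s i) (V i)) : Monotone (ofModel hL) :=
  fun _ _ h _ hg => ⟨fun i hi => hg.1 i fun hi' => hi (h.2.1 hi'),
    fun i hi => hg.2.1 i fun hi' => hi (h.1 hi'), h.2.2 hg.2.2⟩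

/-- The normal subgroup lattice of the product is isomorphic to the combinatorial model. -/
def latticeIso [Finite I] (hL : ∀ i, IsLocalFactor (s i) (V i)) :
    NormalSubgroupLattice (∀ i, H i) ≃o Model (fun i => V i ≠ ⊥) where
  toFun := toModel hL
  invFun := ofModel hL
  left_inv := ofModel_toModel hL
  right_inv := toModel_ofModel hL
  map_rel_iff' {N N'} := by
    refine ⟨fun h => ?_, fun h => toModel_mono hL h⟩
    rw [← ofModel_toModel hL N, ← ofModel_toModel hL N']
    exact ofModel_mono hL h

/-! ### Tower groups -/

/-- Conjugation by an order isomorphism. -/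
def autCongr {P Q : Type*} [LE P] [LE Q] (e : P ≃o Q) : (P ≃o P) ≃* (Q ≃o Q) where
  toFun φ := e.symm.trans (φ.trans e)
  invFun φ := e.trans (φ.trans e.symm)
  left_inv φ := by ext; simp
  right_inv φ := by ext; simp
  map_mul' φ ψ := by
    apply RelIso.ext
    intro x
    change e (φ (ψ (e.symm x))) = e (φ (e.symm (e (ψ (e.symm x)))))
    rw [e.symm_apply_apply]

/-- The isomorphism of normal subgroup lattices induced by a group isomorphism. -/
def latticeCongr {G G' : Type*} [Group G] [Group G'] (e : G ≃* G') :
    NormalSubgroupLattice G ≃o NormalSubgroupLattice G' where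
  toFun N := ⟨N.1.comap e.symm.toMonoidHom, N.2.comap _⟩
  invFun N := ⟨N.1.comap e.toMonoidHom, N.2.comap _⟩
  left_inv N := Subtype.ext (Subgroup.ext fun x => by simp [Subgroup.mem_comap])
  right_inv N := Subtype.ext (Subgroup.ext fun x => by simp [Subgroup.mem_comap])
  map_rel_iff' {N N'} := by
    refine ⟨fun h x hx => ?_, fun h => Subgroup.comap_mono h⟩
    have h1 : e x ∈ N.1.comap e.symm.toMonoidHom := by simpa [Subgroup.mem_comap] using hx
    simpa [Subgroup.mem_comap] using h h1

/-- The Klein four-group for `k = 4`, and the trivial subgroup of `S_k` otherwise. -/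
def kleinOrBot (k : ℕ) : Subgroup (Equiv.Perm (Fin k)) :=
  if h : k = 4 then h ▸ klein else ⊥

theorem isLocalFactor_kleinOrBot {k : ℕ} (hk : 3 ≤ k) :
    IsLocalFactor (Equiv.Perm.sign : Equiv.Perm (Fin k) →* ℤˣ) (kleinOrBot k) := by
  by_cases h : k = 4
  · subst h
    exact isLocalFactor_klein
  · rw [kleinOrBot, dif_neg h]
    exact isLocalFactor_bot hk h

theorem kleinOrBot_ne_bot {k : ℕ} : kleinOrBot k ≠ ⊥ ↔ k = 4 := by
  by_cases h : k = 4
  · subst h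
    simpa [kleinOrBot] using klein_ne_bot
  · simp [kleinOrBot, h]

/-- The factors of the tower group can be indexed by `Fin (a 4) ⊕ Fin B`, the left summand indexing
the `S_4` factors. -/
theorem exists_reindexing (a : ℕ → ℕ) (ha_fin : {k : ℕ | a k ≠ 0}.Finite)
    (ha_lt : ∀ k < 3, a k = 0)
    (B : ℕ) (hB : B = ∑ᶠ (k : ℕ) (_ : 3 ≤ k) (_ : k ≠ 4), a k) :
    ∃ e : Fin (a 4) ⊕ Fin B ≃ (Σ k, Fin (a k)), ∀ x, (e x).1 = 4 ↔ IsLeft x := by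
  classical
  let e4 : Fin (a 4) ≃ {x : Σ k, Fin (a k) // x.1 = 4} :=
    { toFun := fun i => ⟨⟨4, i⟩, rfl⟩
      invFun := fun x => x.2 ▸ x.1.2
      left_inv := fun i => rfl
      right_inv := by
        rintro ⟨⟨k, i⟩, hk⟩
        dsimp only at hk
        subst hk
        rfl }
  let S : Finset ℕ := ha_fin.toFinset.filter (· ≠ 4)
  have hsum : B = ∑ k ∈ S, a k := by
    rw [hB, ← finsum_mem_finset_eq_sum]
    refine finsum_congr fun k => ?_
    by_cases h3 : 3 ≤ k
    · by_cases h4 : k = 4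
      · simp [h4, S]
      · by_cases h0 : a k = 0 <;> simp [h3, h4, S, h0]
    · simp [h3, ha_lt k (by omega)]
  have eB : Nonempty (Fin B ≃ {x : Σ k, Fin (a k) // ¬ x.1 = 4}) := by
    let f : (Σ k : S, Fin (a k)) ≃ {x : Σ k, Fin (a k) // ¬ x.1 = 4} :=
      { toFun := fun x => ⟨⟨x.1.1, x.2⟩, (Finset.mem_filter.1 x.1.2).2⟩
        invFun := fun x => ⟨⟨x.1.1, Finset.mem_filter.2 ⟨ha_fin.mem_toFinset.2
          (Nat.pos_iff_ne_zero.1 x.1.2.pos), x.2⟩⟩, x.1.2⟩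
        left_inv := fun x => rfl
        right_inv := fun x => rfl }
    refine ⟨(Fintype.equivOfCardEq ?_).trans f⟩
    rw [Fintype.card_fin, Fintype.card_sigma, hsum]
    simp only [Fintype.card_fin]
    exact (Finset.sum_coe_sort S a).symm
  obtain ⟨eB⟩ := eB
  refine ⟨(Equiv.sumCongr e4 eB).trans (Equiv.sumCompl _), ?_⟩
  rintro (i | i)
  · simpa [IsLeft] using (e4 i).2
  · simpa [IsLeft] using (eB i).2

/-- A tower group as a product over a single index type. -/
def towerCongr {J : Type*} (a : ℕ → ℕ) (e : J ≃ (Σ k, Fin (a k))) :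
    (Π k : ℕ, Π _i : Fin (a k), Equiv.Perm (Fin k)) ≃* (Π j : J, Equiv.Perm (Fin (e j).1)) where
  toFun g j := g (e j).1 (e j).2
  invFun g := fun k i =>
    Equiv.piCongrLeft (fun x : Σ k, Fin (a k) => Equiv.Perm (Fin x.1)) e g ⟨k, i⟩
  left_inv g := by
    funext k i
    obtain ⟨j, hj⟩ := e.surjective ⟨k, i⟩
    change Equiv.piCongrLeft (fun x : Σ k, Fin (a k) => Equiv.Perm (Fin x.1)) e _
      (⟨k, i⟩ : Σ k, Fin (a k)) = (fun x : Σ k, Fin (a k) => g x.1 x.2) ⟨k, i⟩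
    rw [← hj, Equiv.piCongrLeft_apply_apply]
  right_inv g := by
    funext j
    exact Equiv.piCongrLeft_apply_apply (fun x : Σ k, Fin (a k) => Equiv.Perm (Fin x.1)) e g j
  map_mul' _ _ := rfl

end TowerGroup

/-- **Product Formula.** For a tower group `G = ∏_{k ≥ 3} S_k^{a k}`,
`LatAut(G) ≅ S_{a 4} × S_B` where `B = ∑_{k ≥ 3, k ≠ 4} a k`. -/
theorem latAut_towerGroup_product_formula
    (a : ℕ → ℕ) (ha_fin : {k : ℕ | a k ≠ 0}.Finite)
    (ha_lt : ∀ k < 3, a k = 0)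
    (B : ℕ) (hB : B = ∑ᶠ (k : ℕ) (_ : 3 ≤ k) (_ : k ≠ 4), a k) :
    Nonempty
      (LatAut (Π k : ℕ, Π _i : Fin (a k), Equiv.Perm (Fin k)) ≃*
        Equiv.Perm (Fin (a 4)) × Equiv.Perm (Fin B)) := by
  open TowerGroup in
  obtain ⟨e, he⟩ := exists_reindexing a ha_fin ha_lt B hB
  have hk : ∀ x, 3 ≤ (e x).1 := fun x => by
    by_contra h
    have := (e x).2.pos
    rw [ha_lt _ (by omega)] at this
    exact lt_irrefl _ this
  let iso := (latticeCongr (towerCongr a e)).trans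
    (latticeIso fun x => isLocalFactor_kleinOrBot (hk x))
  have hF : (fun x => kleinOrBot (e x).1 ≠ ⊥) = IsLeft :=
    funext fun x => propext (kleinOrBot_ne_bot.trans (he x))
  rw [hF] at iso
  exact ⟨(autCongr iso).trans (MulEquiv.ofBijective _ (modelAutHom_bijective _ _)).symm⟩
end

section
/- For the group G_0 = S_4^2 × S_3^2, the first step of the LatAut tower is the Klein four group: LatAut(G_0) is isomorphic as a group to S_2 × S_2, i.e., to Equiv.Perm (Fin 2) × Equiv.Perm (Fin 2). -/
namespace LatAutTower

open Equiv

/-! ### The symmetric groups of degree 3 and 4 -/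

/-- The degree of a factor: `true` labels the factors `S₄`, and `false` the factors `S₃`. -/
def deg : Bool → ℕ
  | true => 4
  | false => 3

/-- The factor `S₄` or `S₃`. -/
abbrev Sym (b : Bool) : Type := Perm (Fin (deg b))

/-- A generator, as a normal subgroup, of the unique minimal normal subgroup of `Sym b`. -/
def vElt : (b : Bool) → Sym b
  | true => (swap (0 : Fin 4) 1 * swap 2 3 : Perm (Fin 4))
  | false => (swap (0 : Fin 3) 1 * swap 0 2 : Perm (Fin 3))

/-- A three-cycle in `Sym b`. -/
def cElt : (b : Bool) → Sym b
  | true => (swap (0 : Fin 4) 1 * swap 0 2 : Perm (Fin 4))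
  | false => (swap (0 : Fin 3) 1 * swap 0 2 : Perm (Fin 3))

/-- The unique minimal normal subgroup of `Sym b`: the Klein four group for degree 4, and the
alternating group for degree 3. -/
def V (b : Bool) : Subgroup (Sym b) := Subgroup.normalClosure {vElt b}

instance (b : Bool) : (V b).Normal := Subgroup.normalClosure_normal

/-- The alternating subgroup of `Sym b`. -/
abbrev A (b : Bool) : Subgroup (Sym b) := alternatingGroup (Fin (deg b))

lemma vElt_mem (b : Bool) : vElt b ∈ V b := Subgroup.subset_normalClosure rfl

lemma vElt_ne_one (b : Bool) : vElt b ≠ 1 := by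
  cases b
  · change (swap 0 1 * swap 0 2 : Perm (Fin 3)) ≠ 1
    decide
  · change (swap 0 1 * swap 2 3 : Perm (Fin 4)) ≠ 1
    decide

lemma cElt_isThreeCycle (b : Bool) : (cElt b).IsThreeCycle := by
  cases b
  · exact Perm.isThreeCycle_swap_mul_swap_same (α := Fin 3) (by decide) (by decide) (by decide)
  · exact Perm.isThreeCycle_swap_mul_swap_same (α := Fin 4) (by decide) (by decide) (by decide)

lemma exists_odd (b : Bool) : ∃ t : Sym b, Perm.sign t = -1 := by
  cases b
  · exact ⟨(swap (0 : Fin 3) 1 : Perm (Fin 3)), Perm.sign_swap (show (0 : Fin 3) ≠ 1 by decide)⟩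
  · exact ⟨(swap (0 : Fin 4) 1 : Perm (Fin 4)), Perm.sign_swap (show (0 : Fin 4) ≠ 1 by decide)⟩

lemma V_le_A (b : Bool) : V b ≤ A b := by
  refine Subgroup.normalClosure_le_normal ?_
  rw [Set.singleton_subset_iff, SetLike.mem_coe, Perm.mem_alternatingGroup]
  cases b
  · change Perm.sign (swap 0 1 * swap 0 2 : Perm (Fin 3)) = 1
    decide
  · change Perm.sign (swap 0 1 * swap 2 3 : Perm (Fin 4)) = 1
    decide

lemma sign_of_mem_V {b : Bool} {g : Sym b} (h : g ∈ V b) : Perm.sign g = 1 := V_le_A b h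

/-- A normal subgroup containing one three-cycle contains all of them, since they are conjugate, and
hence the alternating group. -/
lemma A_le_of_cElt_mem {b : Bool} (M : Subgroup (Sym b)) [M.Normal] (h : cElt b ∈ M) :
    A b ≤ M := by
  rw [A, ← Perm.closure_three_cycles_eq_alternating, Subgroup.closure_le]
  intro σ hσ
  obtain ⟨x, rfl⟩ := isConj_iff.1 (Perm.isConj_iff_cycleType_eq.2
    ((cElt_isThreeCycle b).cycleType.trans (Perm.IsThreeCycle.cycleType hσ).symm))
  exact Subgroup.Normal.conj_mem ‹_› _ h x

lemma A_false_le_V : A false ≤ V false := A_le_of_cElt_mem _ (vElt_mem false)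

/-- In degree 4 the Klein four group is properly contained in the alternating group: the identity
and the conjugates of `vElt` form a normal subgroup without three-cycles. -/
lemma cElt_not_mem_V : cElt true ∉ V true := by
  have key : ∀ x y : Perm (Fin 4),
      (x = 1 ∨ ∃ a, x = a * (swap 0 1 * swap 2 3) * a⁻¹) →
      (y = 1 ∨ ∃ a, y = a * (swap 0 1 * swap 2 3) * a⁻¹) →
      (x * y = 1 ∨ ∃ a, x * y = a * (swap 0 1 * swap 2 3) * a⁻¹) := by
    decide +kernel
  let K : Subgroup (Perm (Fin 4)) :=
    { carrier := {x | x = 1 ∨ ∃ a, x = a * (swap 0 1 * swap 2 3) * a⁻¹}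
      mul_mem' := fun hx hy => key _ _ hx hy
      one_mem' := Or.inl rfl
      inv_mem' := by
        rintro x (rfl | ⟨a, rfl⟩)
        · exact Or.inl inv_one
        · refine Or.inr ⟨a, ?_⟩
          rw [mul_inv_rev, mul_inv_rev, inv_inv, mul_assoc a,
            show (swap 0 1 * swap 2 3 : Perm (Fin 4))⁻¹ = swap 0 1 * swap 2 3 by decide] }
  have hK : K.Normal := ⟨by
    rintro x (rfl | ⟨a, rfl⟩) g
    · exact Or.inl (by group)
    · exact Or.inr ⟨g * a, by group⟩⟩
  intro h
  have h' : cElt true ∈ K :=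
    Subgroup.normalClosure_le_normal (N := K)
      (Set.singleton_subset_iff.2 (Or.inr ⟨1, by simp [vElt]⟩)) h
  revert h'
  change ¬ ((swap 0 1 * swap 0 2 : Perm (Fin 4)) = 1 ∨
    ∃ a : Perm (Fin 4), swap 0 1 * swap 0 2 = a * (swap 0 1 * swap 2 3) * a⁻¹)
  decide +kernel

lemma exists_comm_vElt {b : Bool} (g : Sym b) (hg : g ≠ 1) :
    ∃ x y : Sym b, x * g * x⁻¹ * g⁻¹ = y * vElt b * y⁻¹ := by
  cases b
  · have : ∀ g : Perm (Fin 3), g ≠ 1 → ∃ x y : Perm (Fin 3),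
        x * g * x⁻¹ * g⁻¹ = y * (swap 0 1 * swap 0 2) * y⁻¹ := by decide +kernel
    exact this g hg
  · have : ∀ g : Perm (Fin 4), g ≠ 1 → ∃ x y : Perm (Fin 4),
        x * g * x⁻¹ * g⁻¹ = y * (swap 0 1 * swap 2 3) * y⁻¹ := by decide +kernel
    exact this g hg

lemma exists_comm_cElt {b : Bool} (g : Sym b) (hg : g ∉ V b) :
    ∃ x y : Sym b, x * g * x⁻¹ * g⁻¹ = y * cElt b * y⁻¹ := by
  cases b
  · exact exists_comm_vElt g fun h => hg (h ▸ one_mem _)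
  · have : ∀ g : Perm (Fin 4), g = 1 ∨ (∃ y, g = y * (swap 0 1 * swap 2 3) * y⁻¹) ∨
        ∃ x y : Perm (Fin 4), x * g * x⁻¹ * g⁻¹ = y * (swap 0 1 * swap 0 2) * y⁻¹ := by
      decide +kernel
    rcases this g with rfl | ⟨y, rfl⟩ | h
    · exact absurd (one_mem _) hg
    · exact absurd (Subgroup.Normal.conj_mem inferInstance _ (vElt_mem true) y) hg
    · exact h

lemma mem_of_conj_mem {S : Type*} [Group S] {M : Subgroup S} [M.Normal] {x y : S}
    (h : y * x * y⁻¹ ∈ M) : x ∈ M := by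
  have := Subgroup.Normal.conj_mem ‹M.Normal› _ h y⁻¹
  simpa [mul_assoc] using this

lemma V_le_of_comm {b : Bool} (M : Subgroup (Sym b)) [M.Normal] {g : Sym b} (hg : g ≠ 1)
    (h : ∀ x, x * g * x⁻¹ * g⁻¹ ∈ M) : V b ≤ M := by
  obtain ⟨x, y, hxy⟩ := exists_comm_vElt g hg
  exact Subgroup.normalClosure_le_normal
    (Set.singleton_subset_iff.2 (mem_of_conj_mem (hxy ▸ h x)))

lemma A_le_of_comm {b : Bool} (M : Subgroup (Sym b)) [M.Normal] {g : Sym b} (hg : g ∉ V b)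
    (h : ∀ x, x * g * x⁻¹ * g⁻¹ ∈ M) : A b ≤ M := by
  obtain ⟨x, y, hxy⟩ := exists_comm_cElt g hg
  exact A_le_of_cElt_mem M (mem_of_conj_mem (hxy ▸ h x))

/-! ### Normal subgroups of the product -/

/-- The index set of the four factors: a degree label, and a position among the two factors of that
degree. Permutations of the positions thus act on the product without any casts between types. -/
abbrev Idx : Type := Bool × Fin 2

/-- The product of two copies of `S₄` and two copies of `S₃`, indexed by `Idx`. -/
abbrev G : Type := (i : Idx) → Sym i.1

/-- The lattice of normal subgroups of `G`. -/
abbrev L : Type := NormalSubgroupLattice G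

instance : OrderBot L := Subtype.orderBot Subgroup.normal_bot

/-- The element of the product with coordinate `x` at `i`, and trivial coordinates elsewhere. -/
abbrev single (i : Idx) (x : Sym i.1) : G := Pi.mulSingle i x

/-- A normal subgroup `K` of the factor `i`, viewed as a normal subgroup of the product. -/
def inc (i : Idx) (K : Subgroup (Sym i.1)) [hK : K.Normal] : L :=
  ⟨{ carrier := {g | g i ∈ K ∧ ∀ j, j ≠ i → g j = 1}
     mul_mem' := fun ha hb => ⟨mul_mem ha.1 hb.1, fun j hj => by
       simp [ha.2 j hj, hb.2 j hj]⟩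
     one_mem' := ⟨one_mem _, fun _ _ => rfl⟩
     inv_mem' := fun ha => ⟨inv_mem ha.1, fun j hj => by simp [ha.2 j hj]⟩ },
   ⟨fun _ ha g => ⟨hK.conj_mem _ ha.1 (g i), fun j hj => by simp [ha.2 j hj]⟩⟩⟩

/-- The minimal normal subgroup of the factor `i`. -/
abbrev vSub (i : Idx) : L := inc i (V i.1)

/-- The alternating subgroup of the factor `i`. -/
abbrev aSub (i : Idx) : L := inc i (A i.1)

/-- The whole factor `i`. -/
abbrev sSub (i : Idx) : L := inc i ⊤

/-- The subgroup of the elements that are trivial off `w` and whose coordinates on `w` all have the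
same sign. -/
def jSub (w : Finset Idx) : L :=
  ⟨{ carrier := {g | (∀ i ∉ w, g i = 1) ∧ ∀ i ∈ w, ∀ j ∈ w, Perm.sign (g i) = Perm.sign (g j)}
     mul_mem' := fun ha hb => ⟨fun i hi => by simp [ha.1 i hi, hb.1 i hi], fun i hi j hj => by
       simp [ha.2 i hi j hj, hb.2 i hi j hj]⟩
     one_mem' := ⟨fun _ _ => rfl, fun _ _ _ _ => by simp⟩
     inv_mem' := fun ha => ⟨fun i hi => by simp [ha.1 i hi], fun i hi j hj => by
       simp [ha.2 i hi j hj]⟩ },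
   ⟨fun a ha g => ⟨fun i hi => by simp [ha.1 i hi], fun i hi j hj => by
       simp [ha.2 i hi j hj, mul_right_comm _ (Perm.sign (a j)), Int.units_mul_self]⟩⟩⟩

/-- The subgroup of the elements that are trivial off `w` and even on `w`. -/
def evenSub (w : Finset Idx) : L :=
  ⟨{ carrier := {g | (∀ i ∉ w, g i = 1) ∧ ∀ i ∈ w, Perm.sign (g i) = 1}
     mul_mem' := fun ha hb => ⟨fun i hi => by simp [ha.1 i hi, hb.1 i hi], fun i hi => by
       simp [ha.2 i hi, hb.2 i hi]⟩
     one_mem' := ⟨fun _ _ => rfl, fun _ _ => by simp⟩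
     inv_mem' := fun ha => ⟨fun i hi => by simp [ha.1 i hi], fun i hi => by
       simp [ha.2 i hi]⟩ },
   ⟨fun a ha g => ⟨fun i hi => by simp [ha.1 i hi], fun i hi => by simp [ha.2 i hi]⟩⟩⟩

/-- The set of odd coordinates of an element. -/
def oddSupp (g : G) : Finset Idx := Finset.univ.filter fun i => Perm.sign (g i) = -1

lemma mem_oddSupp {g : G} {i : Idx} : i ∈ oddSupp g ↔ Perm.sign (g i) = -1 := by
  simp [oddSupp]

lemma not_mem_oddSupp {g : G} {i : Idx} : i ∉ oddSupp g ↔ Perm.sign (g i) = 1 := by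
  rw [mem_oddSupp]
  rcases Int.units_eq_one_or (Perm.sign (g i)) with h | h <;> simp [h]

lemma exists_of_not_le {N M : L} (h : ¬ N ≤ M) : ∃ g ∈ N.1, g ∉ M.1 :=
  SetLike.not_le_iff_exists.1 h

lemma mulSingle_mem_inc {i : Idx} {K : Subgroup (Sym i.1)} [K.Normal] {x : Sym i.1}
    (hx : x ∈ K) : single i x ∈ (inc i K).1 :=
  ⟨by simpa using hx, fun j hj => by simp [hj]⟩

lemma eq_mulSingle {i : Idx} {g : G} (h : ∀ j, j ≠ i → g j = 1) : single i (g i) = g := by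
  funext j
  by_cases hj : j = i
  · subst hj; simp
  · simp [hj, h j hj]

/-- The intersection of `N` with the factor `i`. -/
def slice (N : L) (i : Idx) : Subgroup (Sym i.1) :=
  N.1.comap (MonoidHom.mulSingle (fun i : Idx => Sym i.1) i)

instance (N : L) (i : Idx) : (slice N i).Normal := N.2.comap _

lemma inc_le_iff {i : Idx} {K : Subgroup (Sym i.1)} [K.Normal] {N : L} :
    inc i K ≤ N ↔ K ≤ slice N i := by
  constructor
  · intro h x hx
    exact h (mulSingle_mem_inc hx)
  · intro h g hg
    rw [← eq_mulSingle hg.2]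
    exact h hg.1

lemma vSub_le_aSub (i : Idx) : vSub i ≤ aSub i := fun _ hg => ⟨V_le_A _ hg.1, hg.2⟩

lemma aSub_le_sSub (i : Idx) : aSub i ≤ sSub i := fun _ hg => ⟨trivial, hg.2⟩

/-- A normal subgroup of the product contains the commutators of the coordinates of its elements. -/
lemma comm_mem_slice {N : L} {g : G} (hg : g ∈ N.1) (i : Idx) (x : Sym i.1) :
    x * g i * x⁻¹ * (g i)⁻¹ ∈ slice N i := by
  have h := mul_mem (N.2.conj_mem g hg (single i x)) (inv_mem hg)
  have e : single i x * g * (single i x)⁻¹ * g⁻¹ =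
      single i (x * g i * x⁻¹ * (g i)⁻¹) := by
    funext j
    by_cases hj : j = i
    · subst hj; simp
    · simp [hj]
  rw [e] at h
  exact h

lemma vSub_le_of_ne_one {N : L} {g : G} (hg : g ∈ N.1) {i : Idx} (h : g i ≠ 1) : vSub i ≤ N :=
  inc_le_iff.2 (V_le_of_comm _ h (comm_mem_slice hg i))

lemma aSub_le_of_not_mem {N : L} {g : G} (hg : g ∈ N.1) {i : Idx} (h : g i ∉ V i.1) :
    aSub i ≤ N :=
  inc_le_iff.2 (A_le_of_comm _ h (comm_mem_slice hg i))

lemma aSub_le_of_odd {N : L} {g : G} (hg : g ∈ N.1) {i : Idx} (h : Perm.sign (g i) = -1) :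
    aSub i ≤ N :=
  aSub_le_of_not_mem hg fun hV => by
    rw [sign_of_mem_V hV] at h
    exact absurd h (by decide)

/-- An even coordinate of an element of `N` lies in every normal subgroup that contains the same
groups `vSub i` and `aSub i` as `N`. -/
lemma mulSingle_mem_of_even {N N' : L} {g : G} (hg : g ∈ N.1) {i : Idx}
    (h : Perm.sign (g i) = 1) (hV : vSub i ≤ N → vSub i ≤ N') (hA : aSub i ≤ N → aSub i ≤ N') :
    single i (g i) ∈ N'.1 := by
  by_cases h1 : g i = 1
  · rw [h1, single, Pi.mulSingle_one]; exact one_mem _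
  by_cases h2 : g i ∈ V i.1
  · exact hV (vSub_le_of_ne_one hg h1) (mulSingle_mem_inc h2)
  · exact hA (aSub_le_of_not_mem hg h2) (mulSingle_mem_inc (K := A i.1) h)

/-- A normal subgroup contains, with an element `g`, every element which is trivial at the even
coordinates of `g` and has constant sign at the odd ones. -/
lemma jSub_le {N : L} {g : G} (hg : g ∈ N.1) : jSub (oddSupp g) ≤ N := by
  intro h hh
  have hA : ∀ i ∈ oddSupp g, ∀ x : Sym i.1, Perm.sign x = 1 → single i x ∈ N.1 :=
    fun i hi x hx => aSub_le_of_odd hg (mem_oddSupp.1 hi) (mulSingle_mem_inc (K := A i.1) hx)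
  by_cases he : ∀ i ∈ oddSupp g, Perm.sign (h i) = 1
  · refine Subgroup.pi_mem_of_mulSingle_mem h fun i => ?_
    by_cases hi : i ∈ oddSupp g
    · exact hA i hi _ (he i hi)
    · rw [hh.1 i hi, Pi.mulSingle_one]; exact one_mem _
  · push Not at he
    obtain ⟨i₀, hi₀, hs⟩ := he
    have ho : ∀ i ∈ oddSupp g, Perm.sign (h i) = -1 := fun i hi => by
      rw [hh.2 i hi i₀ hi₀]
      exact (Int.units_eq_one_or _).resolve_left hs
    -- All coordinates of `h * g⁻¹` are now even, and can be treated one at a time.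
    suffices h * g⁻¹ ∈ N.1 by simpa using mul_mem this hg
    refine Subgroup.pi_mem_of_mulSingle_mem _ fun i => ?_
    by_cases hi : i ∈ oddSupp g
    · refine hA i hi _ ?_
      simp [ho i hi, mem_oddSupp.1 hi]
    · rw [Pi.mul_apply, hh.1 i hi, one_mul]
      refine mulSingle_mem_of_even (inv_mem hg) ?_ id id
      simp [not_mem_oddSupp.1 hi]

/-- A subgroup of the factor `j` contains no minimal normal subgroup of another factor. -/
lemma eq_of_vSub_le {N : L} {i j : Idx} (hN : N ≤ sSub j) (h : vSub i ≤ N) : i = j := by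
  by_contra hij
  have h' := (hN (h (mulSingle_mem_inc (vElt_mem i.1)))).2 i hij
  rw [single, Pi.mulSingle_eq_same] at h'
  exact vElt_ne_one _ h'

lemma vSub_le_sSub (i : Idx) : vSub i ≤ sSub i := (vSub_le_aSub i).trans (aSub_le_sSub i)

lemma vSub_injective : Function.Injective vSub := fun i _ h =>
  eq_of_vSub_le (vSub_le_sSub _) (h ▸ le_refl (vSub i))

lemma exists_vSub_le {N : L} (hN : N ≠ ⊥) : ∃ i, vSub i ≤ N := by
  by_contra! h
  refine hN (le_antisymm (fun g hg => ?_) bot_le)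
  have : g = 1 := funext fun i => by_contra fun hi => h i (vSub_le_of_ne_one hg hi)
  rw [this]; exact one_mem _

lemma isAtom_iff {N : L} : IsAtom N ↔ ∃ i, vSub i = N := by
  constructor
  · intro h
    obtain ⟨i, hi⟩ := exists_vSub_le h.1
    have hne : vSub i ≠ ⊥ := fun hb => by
      have : single i (vElt i.1) ∈ (⊥ : L).1 := hb ▸ mulSingle_mem_inc (vElt_mem i.1)
      have : single i (vElt i.1) = (1 : G) := this
      exact vElt_ne_one _ (by simpa using this)
    exact ⟨i, (h.le_iff.1 hi).resolve_left hne⟩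
  · rintro ⟨i, rfl⟩
    refine ⟨fun hb => ?_, fun N hN => by_contra fun hne => ?_⟩
    · have : single i (vElt i.1) ∈ (⊥ : L).1 := hb ▸ mulSingle_mem_inc (vElt_mem i.1)
      have : single i (vElt i.1) = (1 : G) := this
      exact vElt_ne_one _ (by simpa using this)
    · obtain ⟨j, hj⟩ := exists_vSub_le hne
      obtain rfl := eq_of_vSub_le (hN.le.trans (vSub_le_sSub i)) hj
      exact hN.not_ge hj

/-! ### The action of a lattice automorphism on the atoms -/

lemma exists_atomMap (φ : LatAut G) (i : Idx) : ∃ j, vSub j = φ (vSub i) :=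
  isAtom_iff.1 ((OrderIso.isAtom_iff φ _).2 (isAtom_iff.2 ⟨i, rfl⟩))

/-- The map on indices through which a lattice automorphism acts on the atoms `vSub i`. -/
noncomputable def atomMap (φ : LatAut G) (i : Idx) : Idx := (exists_atomMap φ i).choose

lemma vSub_atomMap (φ : LatAut G) (i : Idx) : vSub (atomMap φ i) = φ (vSub i) :=
  (exists_atomMap φ i).choose_spec

lemma atomMap_symm (φ : LatAut G) (i : Idx) : atomMap φ (atomMap φ.symm i) = i :=
  vSub_injective (by rw [vSub_atomMap, vSub_atomMap, OrderIso.apply_symm_apply])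

lemma atomMap_injective (φ : LatAut G) : Function.Injective (atomMap φ) := fun i j h =>
  vSub_injective (φ.injective (by rw [← vSub_atomMap, ← vSub_atomMap, h]))

/-- A factor is the largest normal subgroup containing only one given atom. -/
lemma map_sSub_le (φ : LatAut G) (i : Idx) : φ (sSub i) ≤ sSub (atomMap φ i) := by
  refine fun g hg => ⟨trivial, fun k hk => by_contra fun hne => hk ?_⟩
  have h := vSub_le_of_ne_one hg hne
  rw [← atomMap_symm φ k, vSub_atomMap, φ.le_iff_le] at h
  rw [← atomMap_symm φ k, eq_of_vSub_le le_rfl h]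

lemma vSub_lt_aSub {i : Idx} (hi : i.1 = true) : vSub i < aSub i := by
  obtain ⟨b, k⟩ := i
  obtain rfl : b = true := hi
  refine lt_of_le_of_ne (vSub_le_aSub _) fun h => cElt_not_mem_V ?_
  have h' : single (true, k) (cElt true) ∈ (aSub (true, k)).1 :=
    mulSingle_mem_inc (i := (true, k)) (K := A true) (cElt_isThreeCycle true).sign
  rw [← h] at h'
  simpa using h'.1

lemma aSub_lt_sSub (i : Idx) : aSub i < sSub i := by
  refine lt_of_le_of_ne (aSub_le_sSub _) fun h => ?_
  obtain ⟨t, ht⟩ := exists_odd i.1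
  have h' : single i t ∈ (sSub i).1 := mulSingle_mem_inc trivial
  rw [← h] at h'
  have h1 : Perm.sign (single i t i) = 1 := h'.1
  rw [single, Pi.mulSingle_eq_same, ht] at h1
  exact absurd h1 (by decide)

/-- The alternating subgroup has index two in its factor. -/
lemma sSub_le_of_odd {N : L} {i : Idx} {g : G} (hA : aSub i ≤ N) (hg : g ∈ N.1)
    (hgi : g ∈ (sSub i).1) (ho : Perm.sign (g i) = -1) : sSub i ≤ N := by
  intro h hh
  rcases Int.units_eq_one_or (Perm.sign (h i)) with hs | hs
  · exact hA ⟨hs, hh.2⟩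
  · suffices h * g⁻¹ ∈ N.1 by simpa using mul_mem this hg
    refine hA ⟨?_, fun j hj => by simp [hh.2 j hj, hgi.2 j hj]⟩
    change Perm.sign ((h * g⁻¹) i) = 1
    simp [ho, hs]

/-- A factor `S₃` has no room for a normal subgroup strictly between it and its atom. -/
lemma sSub_le_of_vSub_lt {N : L} {i : Idx} (hi : i.1 = false) (h1 : vSub i < N)
    (h2 : N ≤ sSub i) : sSub i ≤ N := by
  obtain ⟨b, k⟩ := i
  obtain rfl : b = false := hi
  obtain ⟨g, hg, hgV⟩ := exists_of_not_le h1.not_ge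
  have hA : aSub (false, k) ≤ N :=
    (show aSub (false, k) ≤ vSub (false, k) from fun x hx => ⟨A_false_le_V hx.1, hx.2⟩).trans h1.le
  refine sSub_le_of_odd hA hg (h2 hg) ((Int.units_eq_one_or _).resolve_left fun hs => hgV ?_)
  exact ⟨A_false_le_V hs, (h2 hg).2⟩

lemma atomMap_fst_of_true (φ : LatAut G) {i : Idx} (hi : i.1 = true) :
    (atomMap φ i).1 = true := by
  by_contra h
  rw [Bool.not_eq_true] at h
  have h1 : vSub (atomMap φ i) < φ (aSub i) := by
    rw [vSub_atomMap]; exact φ.lt_iff_lt.2 (vSub_lt_aSub hi)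
  have h2 : φ (aSub i) < φ (sSub i) := φ.lt_iff_lt.2 (aSub_lt_sSub i)
  have h3 := map_sSub_le φ i
  exact absurd (h2.trans_le (h3.trans (sSub_le_of_vSub_lt h h1 (h2.le.trans h3)))) (lt_irrefl _)

/-- A lattice automorphism preserves the degree of the factors. -/
lemma atomMap_fst (φ : LatAut G) (i : Idx) : (atomMap φ i).1 = i.1 := by
  cases hi : i.1
  · by_contra h
    rw [Bool.not_eq_false] at h
    have := atomMap_fst_of_true φ.symm h
    rw [show atomMap φ.symm (atomMap φ i) = i from atomMap_symm φ.symm i, hi] at this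
    exact absurd this (by decide)
  · exact atomMap_fst_of_true φ hi

/-! ### Automorphisms fixing the atoms -/

/-- The subgroup of the lattice automorphisms that fix every atom. -/
def atomFixer : Subgroup (LatAut G) where
  carrier := {φ | ∀ i, φ (vSub i) = vSub i}
  mul_mem' := fun {φ ψ} hφ hψ i => by
    change φ (ψ (vSub i)) = vSub i
    rw [hψ i, hφ i]
  one_mem' := fun _ => rfl
  inv_mem' := fun {φ} hφ i => by
    change φ.symm (vSub i) = vSub i
    rw [OrderIso.symm_apply_eq, hφ i]

/-- As `atomFixer` is closed under inverses, it fixes `N` as soon as none of its members moves `N` to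
an element that is not above `N`. -/
lemma fixed_of_le {N : L} (h : ∀ φ ∈ atomFixer, N ≤ φ N) : ∀ φ ∈ atomFixer, φ N = N := by
  intro φ hφ
  refine le_antisymm ?_ (h φ hφ)
  have h' : N ≤ φ.symm N := h φ⁻¹ (inv_mem hφ)
  rwa [OrderIso.le_symm_apply] at h'

lemma atomMap_of_fix {φ : LatAut G} (hφ : φ ∈ atomFixer) (i : Idx) : atomMap φ i = i :=
  vSub_injective (by rw [vSub_atomMap, hφ i])

lemma fix_aSub (i : Idx) : ∀ φ ∈ atomFixer, φ (aSub i) = aSub i := by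
  refine fixed_of_le fun φ hφ => ?_
  by_cases h : aSub i ≤ vSub i
  · calc aSub i ≤ vSub i := h
      _ = φ (vSub i) := (hφ i).symm
      _ ≤ φ (aSub i) := φ.monotone (vSub_le_aSub i)
  · have hlt : φ (vSub i) < φ (aSub i) := φ.lt_iff_lt.2 ((vSub_le_aSub i).lt_of_not_ge h)
    rw [hφ i] at hlt
    obtain ⟨g, hg, hgV⟩ := exists_of_not_le hlt.not_ge
    have hgS : g ∈ (sSub i).1 := by
      have := map_sSub_le φ i
      rw [atomMap_of_fix hφ] at this
      exact this (φ.monotone (aSub_le_sSub i) hg)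
    exact aSub_le_of_not_mem hg fun hV => hgV ⟨hV, hgS.2⟩

lemma fix_evenSub (w : Finset Idx) : ∀ φ ∈ atomFixer, φ (evenSub w) = evenSub w := by
  refine fixed_of_le fun φ hφ g hg => Subgroup.pi_mem_of_mulSingle_mem g fun i => ?_
  by_cases hi : i ∈ w
  · have hle : aSub i ≤ evenSub w := fun x hx =>
      ⟨fun j hj => hx.2 j fun h => hj (h ▸ hi), fun j _ => by
        by_cases hji : j = i
        · subst hji; exact hx.1
        · rw [hx.2 j hji, map_one]⟩
    have hle' := φ.monotone hle
    rw [fix_aSub i φ hφ] at hle'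
    exact hle' (mulSingle_mem_inc (K := A i.1) (hg.2 i hi))
  · rw [hg.1 i hi, Pi.mulSingle_one]; exact one_mem _

lemma exists_odd_on (w : Finset Idx) :
    ∃ g ∈ (jSub w).1, ∀ i ∈ w, Perm.sign (g i) = -1 := by
  choose t ht using exists_odd
  have hs : ∀ i ∈ w, Perm.sign (if i ∈ w then t i.1 else 1) = -1 := fun i hi => by
    rw [if_pos hi, ht]
  exact ⟨fun i => if i ∈ w then t i.1 else 1, ⟨fun i hi => if_neg hi, fun i hi j hj =>
    (hs i hi).trans (hs j hj).symm⟩, hs⟩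

lemma mem_of_vSub_le_jSub {w : Finset Idx} {i : Idx} (h : vSub i ≤ jSub w) : i ∈ w := by
  by_contra hi
  have := (h (mulSingle_mem_inc (vElt_mem i.1))).1 i hi
  rw [single, Pi.mulSingle_eq_same] at this
  exact vElt_ne_one _ this

/-- If `u` is a proper nonempty subset of `w`, then `jSub w` does not contain `jSub u`: the odd
elements of the latter have coordinates of both signs on `w`. -/
lemma eq_of_jSub_le {u w : Finset Idx} (hu : u.Nonempty) (huw : u ⊆ w) (h : jSub u ≤ jSub w) :
    u = w := by
  obtain ⟨g, hg, ho⟩ := exists_odd_on u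
  obtain ⟨i, hi⟩ := hu
  refine huw.antisymm fun j hj => by_contra fun hju => ?_
  have := (h hg).2 i (huw hi) j hj
  rw [ho i hi, hg.1 j hju, map_one] at this
  exact absurd this (by decide)

lemma fix_jSub (w : Finset Idx) : ∀ φ ∈ atomFixer, φ (jSub w) = jSub w := by
  induction w using Finset.strongInduction with
  | H w ih =>
    refine fixed_of_le fun φ hφ => ?_
    rcases w.eq_empty_or_nonempty with rfl | ⟨i₀, hi₀⟩
    · intro g hg
      rw [show g = 1 from funext fun i => hg.1 i (Finset.notMem_empty i)]
      exact one_mem _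
    have hsub : ∀ i, vSub i ≤ φ (jSub w) → i ∈ w := fun i hi => by
      rw [← hφ i, φ.le_iff_le] at hi
      exact mem_of_vSub_le_jSub hi
    -- Otherwise `φ (jSub w)` would lie below `evenSub w`, which `φ` fixes.
    have hodd : ∃ g ∈ (φ (jSub w)).1, (oddSupp g).Nonempty := by
      by_contra! hall
      have hle : φ (jSub w) ≤ φ (evenSub w) := by
        rw [fix_evenSub w φ hφ]
        refine fun g hg => ⟨fun i hi => by_contra fun hne => hi (hsub i (vSub_le_of_ne_one hg hne)),
          fun i _ => not_mem_oddSupp.1 ?_⟩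
        rw [hall g hg]
        exact Finset.notMem_empty i
      obtain ⟨g, hg, ho⟩ := exists_odd_on w
      have := (φ.le_iff_le.1 hle hg).2 i₀ hi₀
      rw [ho i₀ hi₀] at this
      exact absurd this (by decide)
    obtain ⟨g, hg, hne⟩ := hodd
    have hJ : jSub (oddSupp g) ≤ φ (jSub w) := jSub_le hg
    have hss : oddSupp g ⊆ w := fun i hi =>
      hsub i ((vSub_le_aSub i).trans (aSub_le_of_odd hg (mem_oddSupp.1 hi)))
    rcases hss.eq_or_ssubset with heq | hlt
    · rwa [heq] at hJ
    · rw [← ih _ hlt φ hφ, φ.le_iff_le] at hJ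
      exact absurd (eq_of_jSub_le hne hss hJ) hlt.ne

lemma eq_one_of_fix {φ : LatAut G} (hφ : φ ∈ atomFixer) : φ = 1 := by
  refine OrderIso.ext (funext fun N => ?_)
  refine fixed_of_le (fun ψ hψ g hg => ?_) φ hφ
  have hV : ∀ i, vSub i ≤ N → vSub i ≤ ψ N := fun i h => by
    rw [← hψ i]; exact ψ.monotone h
  have hA : ∀ i, aSub i ≤ N → aSub i ≤ ψ N := fun i h => by
    rw [← fix_aSub i ψ hψ]; exact ψ.monotone h
  have hJ : jSub (oddSupp g) ≤ ψ N := by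
    rw [← fix_jSub _ ψ hψ]; exact ψ.monotone (jSub_le hg)
  -- Split `g` into its odd part and its even part.
  have hsplit : g = (fun i => if i ∈ oddSupp g then g i else 1 : G) *
      (fun i => if i ∈ oddSupp g then 1 else g i : G) := by
    funext i
    by_cases hi : i ∈ oddSupp g <;> simp [hi]
  rw [hsplit]
  refine mul_mem (hJ ⟨fun i hi => if_neg hi, fun i hi j hj => ?_⟩)
    (Subgroup.pi_mem_of_mulSingle_mem _ fun i => ?_)
  · simp only [if_pos hi, if_pos hj]
    rw [mem_oddSupp.1 hi, mem_oddSupp.1 hj]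
  · by_cases hi : i ∈ oddSupp g
    · simp only [if_pos hi, Pi.mulSingle_one]; exact one_mem _
    · simp only [if_neg hi]
      exact mulSingle_mem_of_even hg (not_mem_oddSupp.1 hi) (hV i) (hA i)

/-! ### The automorphisms induced by permuting the factors -/

/-- An isomorphism of groups induces an isomorphism of their lattices of normal subgroups. -/
def latticeIso {H K : Type*} [Group H] [Group K] (e : H ≃* K) :
    NormalSubgroupLattice H ≃o NormalSubgroupLattice K where
  toFun N := ⟨N.1.comap e.symm.toMonoidHom, N.2.comap _⟩
  invFun N := ⟨N.1.comap e.toMonoidHom, N.2.comap _⟩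
  left_inv N := Subtype.ext (by ext x; simp)
  right_inv N := Subtype.ext (by ext x; simp)
  map_rel_iff' {M N} :=
    ⟨fun h x hx => by
      have : e x ∈ N.1.comap e.symm.toMonoidHom := h (by simpa using hx)
      simpa using this,
    fun h x hx => h hx⟩

lemma apply_of_snd_eq (g : G) (i : Idx) {k : Fin 2} (h : k = i.2) : g (i.1, k) = g i := by
  subst h; rfl

/-- The automorphism of `G` given by permuting the factors of each degree. -/
def permAut (π : Bool → Perm (Fin 2)) : G ≃* G where
  toFun g i := g (i.1, (π i.1)⁻¹ i.2)
  invFun g i := g (i.1, π i.1 i.2)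
  left_inv g := funext fun i => apply_of_snd_eq g i (Equiv.symm_apply_apply (π i.1) i.2)
  right_inv g := funext fun i => apply_of_snd_eq g i (Equiv.apply_symm_apply (π i.1) i.2)
  map_mul' _ _ := rfl

/-- The action on the lattice by permuting the factors of each degree. -/
def permHom : (Bool → Perm (Fin 2)) →* LatAut G where
  toFun π := latticeIso (permAut π)
  map_one' := rfl
  map_mul' _ _ := rfl

lemma permHom_vSub (π : Bool → Perm (Fin 2)) (i : Idx) :
    permHom π (vSub i) = vSub (i.1, π i.1 i.2) := by
  refine Subtype.ext (Subgroup.ext fun g => ?_)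
  change (g (i.1, π i.1 i.2) ∈ V i.1 ∧ ∀ j : Idx, j ≠ i → g (j.1, π j.1 j.2) = 1) ↔
    (g (i.1, π i.1 i.2) ∈ V i.1 ∧ ∀ j : Idx, j ≠ (i.1, π i.1 i.2) → g j = 1)
  refine and_congr_right fun _ => ⟨fun h j hj => ?_, fun h j hj => h _ fun he => hj ?_⟩
  · have h' := h (j.1, (π j.1)⁻¹ j.2) fun he => hj (by rw [← he]; simp)
    exact (apply_of_snd_eq g j (Equiv.apply_symm_apply (π j.1) j.2)).symm.trans h'
  · obtain ⟨b, k⟩ := j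
    obtain ⟨c, l⟩ := i
    obtain ⟨hbc, he⟩ := Prod.mk.inj he
    obtain rfl : b = c := hbc
    exact congrArg (Prod.mk b) ((π b).injective he)

lemma permHom_injective : Function.Injective permHom := by
  intro π ρ h
  funext b
  ext k
  have h' := permHom_vSub π (b, k)
  rw [h, permHom_vSub] at h'
  have := vSub_injective h'
  simp_all

lemma permHom_surjective : Function.Surjective permHom := by
  intro φ
  have hinj : ∀ b, Function.Injective fun k : Fin 2 => (atomMap φ (b, k)).2 := fun b k l h => by
    have : atomMap φ (b, k) = atomMap φ (b, l) :=
      Prod.ext ((atomMap_fst φ (b, k)).trans (atomMap_fst φ (b, l)).symm) h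
    exact (Prod.mk.inj (atomMap_injective φ this)).2
  let π : Bool → Perm (Fin 2) := fun b =>
    Equiv.ofBijective _ (Finite.injective_iff_bijective.1 (hinj b))
  have hπ : ∀ i, permHom π (vSub i) = φ (vSub i) := fun i => by
    rw [permHom_vSub, ← vSub_atomMap]
    exact congrArg vSub (Prod.ext (atomMap_fst φ i).symm rfl)
  refine ⟨π, ?_⟩
  have hfix : (permHom π)⁻¹ * φ ∈ atomFixer := fun i => by
    change (permHom π).symm (φ (vSub i)) = vSub i
    rw [← hπ, OrderIso.symm_apply_apply]
  exact inv_mul_eq_one.1 (eq_one_of_fix hfix)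

/-- The product in the theorem, with its factors indexed by `Idx`. -/
def prodEquiv : (Perm (Fin 4) × Perm (Fin 4) × Perm (Fin 3) × Perm (Fin 3)) ≃* G where
  toFun x
    | (true, 0) => x.1
    | (true, 1) => x.2.1
    | (false, 0) => x.2.2.1
    | (false, 1) => x.2.2.2
  invFun g := (g (true, 0), g (true, 1), g (false, 0), g (false, 1))
  left_inv _ := rfl
  right_inv g := by
    funext ⟨b, k⟩
    cases b <;> fin_cases k <;> rfl
  map_mul' x y := by
    funext ⟨b, k⟩
    cases b <;> fin_cases k <;> rfl

/-- A pair of permutations as a family indexed by the degree labels. -/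
def boolEquiv (M : Type*) [Group M] : (Bool → M) ≃* M × M where
  toFun f := (f true, f false)
  invFun x b := cond b x.1 x.2
  left_inv f := by funext b; cases b <;> rfl
  right_inv _ := rfl
  map_mul' _ _ := rfl

/-- Isomorphic lattices have isomorphic automorphism groups. -/
def autCongr {X Y : Type*} [Preorder X] [Preorder Y] (e : X ≃o Y) : (X ≃o X) ≃* (Y ≃o Y) where
  toFun φ := e.symm.trans (φ.trans e)
  invFun φ := e.trans (φ.trans e.symm)
  left_inv φ := by ext x; simp
  right_inv φ := by ext x; simp
  map_mul' φ ψ := by ext x; simp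

end LatAutTower

/-- For `G₀ = S₄² × S₃²`, the first step of the LatAut tower is the Klein four
group: `LatAut(G₀) ≅ S₂ × S₂`. -/
theorem latAut_s4sq_s3sq :
    Nonempty
      (LatAut (Equiv.Perm (Fin 4) × Equiv.Perm (Fin 4) ×
          Equiv.Perm (Fin 3) × Equiv.Perm (Fin 3)) ≃*
        Equiv.Perm (Fin 2) × Equiv.Perm (Fin 2)) :=
  ⟨(LatAutTower.autCongr (LatAutTower.latticeIso LatAutTower.prodEquiv)).trans
    ((MulEquiv.ofBijective LatAutTower.permHom
      ⟨LatAutTower.permHom_injective, LatAutTower.permHom_surjective⟩).symm.trans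
      (LatAutTower.boolEquiv _))⟩
end

section
/- For every m ≥ 3, LatAut(C_2 × S_m) ≅ C_2: the group of lattice automorphisms of the normal subgroup lattice of C_2 × S_m (formalized as Equiv.Perm (Fin 2) × Equiv.Perm (Fin m)) has exactly two elements, i.e., Nat.card of this automorphism group equals 2. -/
open Equiv Equiv.Perm

/-! ### Normal subgroups of symmetric groups -/

/-- The three-cycles form a single conjugacy class of `S_m` and generate `A_m`. -/
lemma alternating_le_of_threeCycle {m : ℕ} {W : Subgroup (Perm (Fin m))} (hW : W.Normal)
    {c : Perm (Fin m)} (hc : c.IsThreeCycle) (hcW : c ∈ W) : alternatingGroup (Fin m) ≤ W := by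
  rw [← closure_three_cycles_eq_alternating, Subgroup.closure_le]
  intro g hg
  have h : IsConj c g := isConj_iff_cycleType_eq.2 (hc.cycleType.trans hg.cycleType.symm)
  obtain ⟨k, rfl⟩ := isConj_iff.1 h
  exact hW.conj_mem c hcW k

lemma commutator_three : ∀ g : Perm (Fin 3), g ≠ 1 → ∃ h : Perm (Fin 3),
    ∃ a b c : Fin 3, a ≠ b ∧ a ≠ c ∧ b ≠ c ∧ h * g * h⁻¹ * g⁻¹ = swap a b * swap a c := by
  decide +kernel

lemma commutator_four : ∀ g : Perm (Fin 4), ¬ (g * g = 1 ∧ sign g = 1) → ∃ h : Perm (Fin 4),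
    ∃ a b c : Fin 4, a ≠ b ∧ a ≠ c ∧ b ≠ c ∧ h * g * h⁻¹ * g⁻¹ = swap a b * swap a c := by
  decide +kernel

lemma klein_mul_mem : ∀ a b : Perm (Fin 4), (a * a = 1 ∧ sign a = 1) → (b * b = 1 ∧ sign b = 1) →
    (a * b * (a * b) = 1 ∧ sign (a * b) = 1) := by
  decide +kernel

lemma klein_conj : ∀ a b : Perm (Fin 4), (a * a = 1 ∧ sign a = 1) → (b * b = 1 ∧ sign b = 1) →
    a ≠ 1 → b ≠ 1 → ∃ h : Perm (Fin 4), h * a * h⁻¹ = b := by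
  decide +kernel

/-- The normal Klein four-subgroup of `S₄`, as the set of even elements of order at most two. -/
def kleinV : Subgroup (Perm (Fin 4)) where
  carrier := {g | g * g = 1 ∧ sign g = 1}
  mul_mem' := fun {a b} ha hb => klein_mul_mem a b ha hb
  one_mem' := by simp
  inv_mem' := by
    rintro a ⟨h1, h2⟩
    refine ⟨?_, by simp [h2]⟩
    rw [← mul_inv_rev, h1, inv_one]

lemma mem_kleinV {g : Perm (Fin 4)} : g ∈ kleinV ↔ g * g = 1 ∧ sign g = 1 := Iff.rfl

lemma kleinV_normal : kleinV.Normal := by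
  refine ⟨fun a ha g => ?_⟩
  rw [mem_kleinV] at ha ⊢
  refine ⟨?_, by simp [ha.2, mul_comm]⟩
  have : g * a * g⁻¹ * (g * a * g⁻¹) = g * (a * a) * g⁻¹ := by group
  rw [this, ha.1]; simp

/-- Only the identity commutes with every permutation of at least three points. -/
lemma eq_one_of_central {m : ℕ} (hm : 3 ≤ m) (b : Perm (Fin m)) (hb : ∀ h, h * b * h⁻¹ * b⁻¹ = 1) :
    b = 1 := by
  ext1 x
  by_contra hx
  rw [one_apply] at hx
  obtain ⟨z, hz⟩ : ∃ z, z ∉ ({x, b x} : Finset (Fin m)) := by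
    by_contra! h
    have h1 := Finset.card_le_card (fun z _ => h z : (Finset.univ : Finset (Fin m)) ⊆ {x, b x})
    have h2 : ({x, b x} : Finset (Fin m)).card ≤ 2 := Finset.card_le_two
    simp at h1
    omega
  simp only [Finset.mem_insert, Finset.mem_singleton, not_or] at hz
  have h := hb (swap x z)
  rw [mul_inv_eq_one, mul_inv_eq_iff_eq_mul] at h
  have h' := congrArg (fun f => f x) h
  simp only [Perm.mul_apply, swap_apply_left, swap_apply_of_ne_of_ne hx (Ne.symm hz.2)] at h'
  exact hz.1 (b.injective h').symm

/-- A normal subgroup containing the alternating group is the alternating or the full group. -/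
lemma eq_of_alternating_le {m : ℕ} {W : Subgroup (Perm (Fin m))}
    (h : alternatingGroup (Fin m) ≤ W) : W = alternatingGroup (Fin m) ∨ W = ⊤ := by
  by_cases hW : W ≤ alternatingGroup (Fin m)
  · exact Or.inl (le_antisymm hW h)
  · right
    obtain ⟨g, hg, hgA⟩ := SetLike.not_le_iff_exists.1 hW
    rw [eq_top_iff]
    intro x _
    by_cases hx : x ∈ alternatingGroup (Fin m)
    · exact h hx
    · rw [mem_alternatingGroup] at hx hgA
      have h1 := (Int.units_eq_one_or (sign x)).resolve_left hx
      have h2 := (Int.units_eq_one_or (sign g)).resolve_left hgA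
      have : x * g⁻¹ ∈ W := h (by rw [mem_alternatingGroup]; simp [h1, h2])
      simpa using W.mul_mem this hg

lemma alternating_ne_top {m : ℕ} (hm : 3 ≤ m) : alternatingGroup (Fin m) ≠ ⊤ := by
  intro h
  have h1 : swap (⟨0, by omega⟩ : Fin m) ⟨1, by omega⟩ ∈ alternatingGroup (Fin m) := by
    rw [h]; trivial
  rw [mem_alternatingGroup, sign_swap (by simp)] at h1
  exact absurd h1 (by decide)

lemma alternating_ne_bot {m : ℕ} (hm : 3 ≤ m) : alternatingGroup (Fin m) ≠ ⊥ := by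
  have := alternatingGroup.nontrivial_of_three_le_card (α := Fin m) (by simpa using hm)
  exact (Subgroup.nontrivial_iff_ne_bot _).1 this

lemma normal_classification {m : ℕ} (hm : 3 ≤ m) (hm4 : m ≠ 4) {W : Subgroup (Perm (Fin m))}
    (hW : W.Normal) : W = ⊥ ∨ alternatingGroup (Fin m) ≤ W := by
  by_cases h : W = ⊥
  · exact Or.inl h
  right
  rcases hm.eq_or_lt with rfl | h3
  · obtain ⟨g, hg, hg1⟩ := W.ne_bot_iff_exists_ne_one.1 h |>.elim
      (fun x hx => (⟨x.1, x.2, fun h => hx (Subtype.ext h)⟩ : ∃ g, g ∈ W ∧ g ≠ 1))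
    obtain ⟨k, a, b, c, hab, hac, hbc, e⟩ := commutator_three g hg1
    refine alternating_le_of_threeCycle hW (isThreeCycle_swap_mul_swap_same hab hac hbc) ?_
    rw [← e]
    exact W.mul_mem (hW.conj_mem g hg k) (W.inv_mem hg)
  · exact alternatingGroup_le_of_normal (by simp; omega) ((Subgroup.nontrivial_iff_ne_bot _).2 h)

lemma normal_classification_four {W : Subgroup (Perm (Fin 4))}
    (hW : W.Normal) : W = ⊥ ∨ W = kleinV ∨ alternatingGroup (Fin 4) ≤ W := by
  by_cases h : W ≤ kleinV
  · by_cases h' : W = ⊥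
    · exact Or.inl h'
    right; left
    obtain ⟨g, hg, hg1⟩ := W.ne_bot_iff_exists_ne_one.1 h' |>.elim
      (fun x hx => (⟨x.1, x.2, fun h => hx (Subtype.ext h)⟩ : ∃ g, g ∈ W ∧ g ≠ 1))
    refine le_antisymm h fun k hk => ?_
    by_cases hk1 : k = 1
    · rw [hk1]; exact W.one_mem
    · obtain ⟨x, rfl⟩ := klein_conj g k (h hg) hk hg1 hk1
      exact hW.conj_mem g hg x
  · right; right
    obtain ⟨g, hg, hgV⟩ := SetLike.not_le_iff_exists.1 h
    obtain ⟨k, a, b, c, hab, hac, hbc, e⟩ := commutator_four g hgV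
    refine alternating_le_of_threeCycle hW (isThreeCycle_swap_mul_swap_same hab hac hbc) ?_
    rw [← e]
    exact W.mul_mem (hW.conj_mem g hg k) (W.inv_mem hg)

/-- If a nontrivial coset of a normal subgroup `W` of `S_m` is central in `S_m ⧸ W`, then
`W` contains the alternating group. -/
lemma alternating_le_of_commutators {m : ℕ} (hm : 3 ≤ m) {W : Subgroup (Perm (Fin m))}
    (hW : W.Normal) (b : Perm (Fin m)) (hb : b ∉ W) (hc : ∀ h, h * b * h⁻¹ * b⁻¹ ∈ W) :
    alternatingGroup (Fin m) ≤ W := by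
  have key : W ≠ ⊥ := by
    rintro rfl
    exact hb (Subgroup.mem_bot.2 (eq_one_of_central hm b fun h => Subgroup.mem_bot.1 (hc h)))
  by_cases h4 : m = 4
  · subst h4
    rcases normal_classification_four hW with h | rfl | h
    · exact absurd h key
    · obtain ⟨k, x, y, z, hxy, hxz, hyz, e⟩ := commutator_four b hb
      refine alternating_le_of_threeCycle hW (isThreeCycle_swap_mul_swap_same hxy hxz hyz) ?_
      rw [← e]
      exact hc k
    · exact h
  · exact (normal_classification hm h4 hW).resolve_left key

/-! ### Normal subgroups of `C₂ × S_m` -/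

/-- The pairs `(a, b)` in `C₂ × S_m` with `sign a = sign b`: the graph of the sign map under
`C₂ ≅ {±1}`. -/
def signDiag (m : ℕ) : Subgroup (Perm (Fin 2) × Perm (Fin m)) :=
  (sign.comp (MonoidHom.fst _ _)).eqLocus (sign.comp (MonoidHom.snd _ _))

lemma mem_signDiag {m : ℕ} {x : Perm (Fin 2) × Perm (Fin m)} :
    x ∈ signDiag m ↔ sign x.1 = sign x.2 := Iff.rfl

lemma signDiag_normal (m : ℕ) : (signDiag m).Normal := by
  refine ⟨fun a ha g => ?_⟩
  rw [mem_signDiag] at ha ⊢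
  simp only [Prod.fst_mul, Prod.snd_mul, Prod.fst_inv, Prod.snd_inv, Perm.sign_mul, Perm.sign_inv,
    ha]
  rw [mul_right_comm, mul_right_comm (sign g.2)]
  simp

lemma perm_two (a : Perm (Fin 2)) : a = 1 ∨ a = swap 0 1 := by
  revert a; decide

lemma sign_swap_two : sign (swap (0 : Fin 2) 1) = -1 := by decide

/-- Goursat's lemma for normal subgroups of `C₂ × S_m`: they are products, apart from the
sign-diagonal one. -/
lemma normal_prod_classification {m : ℕ} (hm : 3 ≤ m)
    {N : Subgroup (Perm (Fin 2) × Perm (Fin m))} (hN : N.Normal) :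
    N = signDiag m ∨ ∃ W : Subgroup (Perm (Fin m)), W.Normal ∧
      (N = (⊥ : Subgroup (Perm (Fin 2))).prod W ∨ N = (⊤ : Subgroup (Perm (Fin 2))).prod W) := by
  set W : Subgroup (Perm (Fin m)) := N.comap (MonoidHom.inr _ _) with hWdef
  have hW : W.Normal := hN.comap _
  have memW : ∀ b, b ∈ W ↔ ((1 : Perm (Fin 2)), b) ∈ N := fun b => Iff.rfl
  by_cases hZ : ((swap 0 1 : Perm (Fin 2)), (1 : Perm (Fin m))) ∈ N
  · refine Or.inr ⟨W, hW, Or.inr ?_⟩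
    ext ⟨a, b⟩
    have ha : (a, (1 : Perm (Fin m))) ∈ N := by
      rcases perm_two a with rfl | rfl
      · exact N.one_mem
      · exact hZ
    have : (a, b) = (a, 1) * (1, b) := by simp
    rw [this, N.mul_mem_cancel_left ha, Subgroup.mem_prod]
    simp [memW]
  by_cases hE : N ≤ (⊥ : Subgroup (Perm (Fin 2))).prod W
  · refine Or.inr ⟨W, hW, Or.inl (le_antisymm hE ?_)⟩
    rintro ⟨a, b⟩ ⟨ha, hb⟩
    obtain rfl : a = 1 := by simpa using ha
    exact (memW b).1 hb
  left
  obtain ⟨⟨a, b⟩, hab, hnot⟩ := SetLike.not_le_iff_exists.1 hE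
  have ha : a = swap 0 1 := by
    refine (perm_two a).resolve_left ?_
    rintro rfl
    exact hnot ⟨Subgroup.one_mem _, (memW b).2 hab⟩
  subst ha
  have hbW : b ∉ W := by
    intro h
    apply hZ
    simpa using N.mul_mem hab (N.inv_mem ((memW b).1 h))
  have hA : alternatingGroup (Fin m) ≤ W := by
    refine alternating_le_of_commutators hm hW b hbW fun h => ?_
    rw [memW]
    simpa using N.mul_mem (hN.conj_mem _ hab (1, h)) (N.inv_mem hab)
  have hWA : W = alternatingGroup (Fin m) := by
    refine (eq_of_alternating_le hA).resolve_right ?_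
    intro h
    exact hbW (h ▸ Subgroup.mem_top b)
  have hsb : sign b = -1 :=
    (Int.units_eq_one_or _).resolve_left (by rwa [hWA, mem_alternatingGroup] at hbW)
  have mem1 : ∀ c, ((1 : Perm (Fin 2)), c) ∈ N ↔ sign c = 1 := fun c => by
    rw [← memW, hWA, mem_alternatingGroup]
  ext ⟨x, c⟩
  rw [mem_signDiag]
  rcases perm_two x with rfl | rfl
  · rw [mem1]; simp [eq_comm]
  · have : ((swap 0 1 : Perm (Fin 2)), c) = (swap 0 1, b) * (1, b⁻¹ * c) := by simp
    rw [this, N.mul_mem_cancel_left hab, mem1, ← this]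
    rw [Perm.sign_mul, Perm.sign_inv, hsb, sign_swap_two]
    rcases Int.units_eq_one_or (sign c) with h | h <;> simp [h]

/-! ### The lattice and its automorphisms -/

/-- The order of the normal subgroup lattice of `C₂ × S_m` in terms of the chain `Fin (n + 1)` of
normal subgroups of `S_m`: `some (e, i)` stands for the product of the trivial (`e = false`) or
full (`e = true`) subgroup of `C₂` with the `i`-th normal subgroup, `none` for the diagonal. -/
def modelRel (n : ℕ) : Option (Bool × Fin (n + 1)) → Option (Bool × Fin (n + 1)) → Prop
  | some (a, i), some (b, j) => a ≤ b ∧ i ≤ j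
  | some (a, i), none => a = false ∧ i ≠ Fin.last n
  | none, some (b, j) => b = true ∧ j = Fin.last n
  | none, none => True

instance (n : ℕ) : DecidableRel (modelRel n)
  | some (a, i), some (b, j) => inferInstanceAs (Decidable (a ≤ b ∧ i ≤ j))
  | some (a, i), none => inferInstanceAs (Decidable (a = false ∧ i ≠ Fin.last n))
  | none, some (b, j) => inferInstanceAs (Decidable (b = true ∧ j = Fin.last n))
  | none, none => inferInstanceAs (Decidable True)

/-- The normal subgroup of `C₂ × S_m` represented by a point of the model. -/
def modelMap {m n : ℕ} (W : Fin (n + 1) → Subgroup (Perm (Fin m))) :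
    Option (Bool × Fin (n + 1)) → Subgroup (Perm (Fin 2) × Perm (Fin m))
  | some (a, i) => (if a then ⊤ else ⊥ : Subgroup (Perm (Fin 2))).prod (W i)
  | none => signDiag m

lemma modelMap_normal {m n : ℕ} (W : Fin (n + 1) → Subgroup (Perm (Fin m)))
    (hW : ∀ i, (W i).Normal) (x) : (modelMap W x).Normal := by
  rcases x with _ | ⟨a, i⟩
  · exact signDiag_normal m
  · have := hW i
    cases a
    · exact Subgroup.prod_normal ⊥ (W i)
    · exact Subgroup.prod_normal ⊤ (W i)

lemma ite_le_ite (a b : Bool) :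
    (if a then ⊤ else ⊥ : Subgroup (Perm (Fin 2))) ≤ (if b then ⊤ else ⊥) ↔ a ≤ b := by
  cases a <;> cases b <;> simp

lemma prod_le_prod_iff' {G H : Type*} [Group G] [Group H] {A A' : Subgroup G} {B B' : Subgroup H} :
    A.prod B ≤ A'.prod B' ↔ A ≤ A' ∧ B ≤ B' := by
  refine ⟨fun h => ⟨fun a ha => ?_, fun b hb => ?_⟩, fun h => Subgroup.prod_mono h.1 h.2⟩
  · exact (h (show (a, 1) ∈ _ from ⟨ha, B.one_mem⟩)).1
  · exact (h (show (1, b) ∈ _ from ⟨A.one_mem, hb⟩)).2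

lemma modelMap_le_iff {m n : ℕ} (hm : 3 ≤ m) (W : Fin (n + 1) → Subgroup (Perm (Fin m)))
    (hle : ∀ i j, W i ≤ W j ↔ i ≤ j) (hlast : ∀ i, W i = ⊤ ↔ i = Fin.last n)
    (hA : ∀ i, i ≠ Fin.last n → W i ≤ alternatingGroup (Fin m)) (x y) :
    modelMap W x ≤ modelMap W y ↔ modelRel n x y := by
  -- a transposition, so that `(swap 0 1, t)` lies in the diagonal and `(1, t)` does not
  obtain ⟨t, ht⟩ : ∃ t : Perm (Fin m), sign t = -1 :=
    ⟨swap ⟨0, by omega⟩ ⟨1, by omega⟩, sign_swap (by simp)⟩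
  rcases x with _ | ⟨a, i⟩ <;> rcases y with _ | ⟨b, j⟩
  · simp [modelRel]
  · simp only [modelMap, modelRel]
    constructor
    · intro h
      have h1 : ((swap 0 1 : Perm (Fin 2)), t) ∈ signDiag m := by
        rw [mem_signDiag, ht, sign_swap_two]
      have h2 := h h1
      refine ⟨?_, (hlast j).1 ?_⟩
      · cases b
        · exact absurd h2.1 (by simp)
        · rfl
      · refine (eq_of_alternating_le fun g hg => ?_).resolve_left fun e => ?_
        · have : ((1 : Perm (Fin 2)), g) ∈ signDiag m := by
            rw [mem_signDiag, mem_alternatingGroup.1 hg, Perm.sign_one]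
          exact (h this).2
        · have h3 : t ∈ W j := h2.2
          rw [e, mem_alternatingGroup, ht] at h3
          exact absurd h3 (by decide)
    · rintro ⟨rfl, h⟩
      rw [(hlast j).2 h]
      exact fun x _ => ⟨by simp, by simp⟩
  · simp only [modelMap, modelRel]
    constructor
    · intro h
      constructor
      · cases a
        · rfl
        · have h1 := h (show ((swap 0 1 : Perm (Fin 2)), (1 : Perm (Fin m))) ∈ _ from
            ⟨by simp, (W i).one_mem⟩)
          rw [mem_signDiag] at h1
          simp only [Perm.sign_one, sign_swap_two] at h1
          exact absurd h1 (by decide)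
      · intro hi
        have h1 := h (show ((1 : Perm (Fin 2)), t) ∈ _ from
            ⟨Subgroup.one_mem _, by rw [(hlast i).2 hi]; trivial⟩)
        rw [mem_signDiag] at h1
        simp only [Perm.sign_one, ht] at h1
        exact absurd h1 (by decide)
    · rintro ⟨rfl, hi⟩ ⟨x, c⟩ ⟨h1, h2⟩
      obtain rfl : x = 1 := by simpa using h1
      rw [mem_signDiag]
      simp [mem_alternatingGroup.1 (hA i hi h2)]
  · simp only [modelMap, modelRel]
    rw [prod_le_prod_iff', ite_le_ite, hle]

lemma modelRel_antisymm {n : ℕ} (x y) (h : modelRel n x y) (h' : modelRel n y x) : x = y := by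
  rcases x with _ | ⟨a, i⟩ <;> rcases y with _ | ⟨b, j⟩
  · rfl
  · obtain ⟨h1, h2⟩ := h; obtain ⟨h3, h4⟩ := h'; exact absurd h2 h4
  · obtain ⟨h1, h2⟩ := h; obtain ⟨h3, h4⟩ := h'; exact absurd h4 h2
  · rw [le_antisymm h.1 h'.1, le_antisymm h.2 h'.2]

/-- A chain enumeration of the normal subgroups of `S_m` identifies the normal subgroup lattice
of `C₂ × S_m` with the model. -/
lemma exists_model {m n : ℕ} (hm : 3 ≤ m) (W : Fin (n + 1) → Subgroup (Perm (Fin m)))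
    (hW : ∀ i, (W i).Normal) (hmono : StrictMono W) (hsurj : ∀ N, N.Normal → ∃ i, N = W i)
    (hlast : W (Fin.last n) = ⊤) :
    Nonempty (modelRel n ≃r
      ((· ≤ ·) : NormalSubgroupLattice (Perm (Fin 2) × Perm (Fin m)) → _ → Prop)) := by
  have hle : ∀ i j, W i ≤ W j ↔ i ≤ j := fun i j => hmono.le_iff_le
  have hlast' : ∀ i, W i = ⊤ ↔ i = Fin.last n := fun i => by
    rw [← hlast]; exact hmono.injective.eq_iff
  have hA : ∀ i, i ≠ Fin.last n → W i ≤ alternatingGroup (Fin m) := by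
    intro i hi
    obtain ⟨j, hj⟩ := hsurj (alternatingGroup (Fin m)) inferInstance
    rcases le_total i j with h | h
    · rw [hj]; exact (hle i j).2 h
    · have h1 : alternatingGroup (Fin m) ≤ W i := by rw [hj]; exact (hle j i).2 h
      exact ((eq_of_alternating_le h1).resolve_right (fun h => hi ((hlast' i).1 h))).le
  have hiff := modelMap_le_iff hm W hle hlast' hA
  let F : Option (Bool × Fin (n + 1)) → NormalSubgroupLattice (Perm (Fin 2) × Perm (Fin m)) :=
    fun x => ⟨modelMap W x, modelMap_normal W hW x⟩
  have hF : Function.Bijective F := by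
    constructor
    · intro x y hxy
      have h : modelMap W x = modelMap W y := congrArg Subtype.val hxy
      exact modelRel_antisymm x y ((hiff x y).1 h.le) ((hiff y x).1 h.ge)
    · rintro ⟨N, hN⟩
      rcases normal_prod_classification hm hN with h | ⟨V, hV, h⟩
      · exact ⟨none, Subtype.ext h.symm⟩
      · obtain ⟨i, rfl⟩ := hsurj V hV
        rcases h with h | h
        · exact ⟨some (false, i), Subtype.ext h.symm⟩
        · exact ⟨some (true, i), Subtype.ext h.symm⟩
  exact ⟨⟨Equiv.ofBijective F hF, fun {x y} => hiff x y⟩⟩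

/-- The numbers of elements below and above a point of the model. -/
def modelRank (n : ℕ) (x : Option (Bool × Fin (n + 1))) : ℕ × ℕ :=
  (Fintype.card {y // modelRel n y x}, Fintype.card {y // modelRel n x y})

lemma modelRank_map {n : ℕ} (f : modelRel n ≃r modelRel n) (x) :
    modelRank n (f x) = modelRank n x := by
  refine Prod.ext ?_ ?_
  · exact (Fintype.card_congr (Equiv.subtypeEquiv (p := fun y => modelRel n y x)
      (q := fun y => modelRel n y (f x)) f.toEquiv fun y => f.map_rel_iff.symm)).symm
  · exact (Fintype.card_congr (Equiv.subtypeEquiv (p := fun y => modelRel n x y)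
      (q := fun y => modelRel n (f x) y) f.toEquiv fun y => f.map_rel_iff.symm)).symm

/-- An automorphism preserves ranks. So if the diagonal and `1 × S_m` are the only two points
that may share a rank, and exchanging them is an automorphism, there are exactly two automorphisms. -/
lemma card_modelAut {n : ℕ}
    (h1 : ∀ x y, modelRank n x = modelRank n y → x = y ∨
      x = none ∧ y = some (false, Fin.last n) ∨ y = none ∧ x = some (false, Fin.last n))
    (h2 : ∀ x y, modelRel n (swap none (some (false, Fin.last n)) x)
      (swap none (some (false, Fin.last n)) y) ↔ modelRel n x y) :
    Nat.card (modelRel n ≃r modelRel n) = 2 := by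
  rw [Nat.card_eq_two_iff]
  let s : modelRel n ≃r modelRel n := ⟨swap none (some (false, Fin.last n)), fun {x y} => h2 x y⟩
  have hs : ∀ x, s x = swap none (some (false, Fin.last n)) x := fun _ => rfl
  refine ⟨RelIso.refl _, s, fun h => ?_, Set.eq_univ_of_forall fun f => ?_⟩
  · have h0 : (RelIso.refl (modelRel n)) none = s none := by rw [← h]
    rw [hs, swap_apply_left] at h0
    exact absurd h0 (by simp)
  have hf : ∀ x, f x = x ∨
      f x = none ∧ x = some (false, Fin.last n) ∨ x = none ∧ f x = some (false, Fin.last n) :=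
    fun x => h1 _ _ (modelRank_map f x)
  have hinj := f.injective
  have hfix : ∀ x, x ≠ none → x ≠ some (false, Fin.last n) → f x = x := by
    intro x hx hx'
    rcases hf x with h | h | h
    · exact h
    · exact absurd h.2 hx'
    · exact absurd h.1 hx
  by_cases h0 : f none = none
  · left
    ext1 x
    rcases hf x with h | h | h
    · exact h
    · have := hinj (h.1.trans h0.symm)
      rw [this]; exact h0
    · rw [h.1]; exact h0
  · right
    have h0' : f none = some (false, Fin.last n) := by
      rcases hf none with h | h | h
      · exact absurd h h0
      · exact absurd h.1 h0
      · exact h.2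
    have h3 : f (some (false, Fin.last n)) = none := by
      rcases hf (some (false, Fin.last n)) with h | h | h
      · exact absurd (hinj (h.trans h0'.symm)) (by simp)
      · exact h.1
      · exact absurd h.1 (by simp)
    ext1 x
    rw [hs]
    by_cases hx : x = none
    · rw [hx, h0', swap_apply_left]
    by_cases hx' : x = some (false, Fin.last n)
    · rw [hx', h3, swap_apply_right]
    rw [swap_apply_of_ne_of_ne hx hx', hfix x hx hx']

lemma card_latAut_of_model {m n : ℕ} (hcard : Nat.card (modelRel n ≃r modelRel n) = 2)
    (h : Nonempty (modelRel n ≃r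
      ((· ≤ ·) : NormalSubgroupLattice (Perm (Fin 2) × Perm (Fin m)) → _ → Prop))) :
    Nat.card (LatAut (Perm (Fin 2) × Perm (Fin m))) = 2 := by
  obtain ⟨e⟩ := h
  refine Eq.trans ?_ hcard
  refine Nat.card_congr
    ⟨fun f => (e.trans f).trans e.symm, fun g => (e.symm.trans g).trans e, fun f => ?_, fun g => ?_⟩
  · exact DFunLike.ext _ _ fun x => by simp
  · ext1 x; simp

/-- For every `m ≥ 3`, `LatAut(C₂ × S_m) ≅ C₂`: the group of lattice
automorphisms of the normal subgroup lattice of `C₂ × S_m` has exactly two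
elements. -/
theorem latAut_c2_prod_symmetricGroup (m : ℕ) (hm : 3 ≤ m) :
    Nat.card (LatAut (Equiv.Perm (Fin 2) × Equiv.Perm (Fin m))) = 2 := by
  have hb := alternating_ne_bot hm
  have ht := alternating_ne_top hm
  by_cases h4 : m = 4
  · subst h4
    have hVb : kleinV ≠ ⊥ := by
      intro h
      have : swap 0 1 * swap 2 3 ∈ kleinV := by rw [mem_kleinV]; decide
      rw [h, Subgroup.mem_bot] at this
      exact absurd this (by decide)
    have hVA : kleinV < alternatingGroup (Fin 4) := by
      refine lt_of_le_of_ne (fun g hg => mem_alternatingGroup.2 hg.2) fun h => ?_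
      have : swap 0 1 * swap 0 2 ∈ alternatingGroup (Fin 4) := by
        rw [mem_alternatingGroup]; decide
      rw [← h, mem_kleinV] at this
      exact absurd this (by decide)
    refine card_latAut_of_model (n := 3)
      (card_modelAut (by decide +kernel) (by decide +kernel))
      (exists_model hm ![⊥, kleinV, alternatingGroup (Fin 4), ⊤] ?_ ?_ ?_ rfl)
    · have := kleinV_normal
      intro i; fin_cases i <;> simp <;> infer_instance
    · rw [Fin.strictMono_iff_lt_succ]
      intro i; fin_cases i
      · exact bot_lt_iff_ne_bot.2 hVb
      · exact hVA
      · exact lt_top_iff_ne_top.2 ht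
    · intro N hN
      rcases normal_classification_four hN with h | h | h
      · exact ⟨0, h⟩
      · exact ⟨1, h⟩
      · rcases eq_of_alternating_le h with h | h
        · exact ⟨2, h⟩
        · exact ⟨3, h⟩
  · refine card_latAut_of_model (n := 2)
      (card_modelAut (by decide +kernel) (by decide +kernel))
      (exists_model hm ![⊥, alternatingGroup (Fin m), ⊤] ?_ ?_ ?_ rfl)
    · intro i; fin_cases i <;> simp <;> infer_instance
    · rw [Fin.strictMono_iff_lt_succ]
      intro i; fin_cases i
      · exact bot_lt_iff_ne_bot.2 hb
      · exact lt_top_iff_ne_top.2 ht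
    · intro N hN
      rcases normal_classification hm h4 hN with h | h
      · exact ⟨0, h⟩
      · rcases eq_of_alternating_le h with h | h
        · exact ⟨1, h⟩
        · exact ⟨2, h⟩
end

section
/- The normal subgroup lattice of S_4 is a chain of length 3: the subtype {N : Subgroup (Equiv.Perm (Fin 4)) // N.Normal}, ordered by inclusion, is linearly ordered and has exactly 4 elements (corresponding to the chain 1 < V_4 < A_4 < S_4). -/
/-!
The point is that products of two conjugates already fill up the next term of the chain
`1 < V₄ < A₄ < S₄`: if `g ≠ 1` then every element of `V₄`, and if moreover `g ∉ V₄` then every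
element of `A₄`, has the form `(a g a⁻¹)(b g b⁻¹)`; this is a finite check
(`exists_mul_conj_eq`). Hence a normal subgroup not contained in `1`, `V₄` or `A₄` contains
`V₄`, `A₄` or `S₄` respectively (for the last, `A₄` together with an odd element generates
`S₄`). So every normal subgroup is a term of the chain (`eq_chain_of_normal`), and the inclusions
are strict (`strictMono_s4Chain`).
-/

open Equiv.Perm

/-- The Klein four-group in `S₄`, encoded as the even permutations of square one: the identity
and the three double transpositions. -/
def kleinFourS4 : Subgroup (Equiv.Perm (Fin 4)) where
  carrier := {g | sign g = 1 ∧ g * g = 1}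
  one_mem' := by simp
  mul_mem' := by
    have key : ∀ a b : Equiv.Perm (Fin 4), (sign a = 1 ∧ a * a = 1) →
        (sign b = 1 ∧ b * b = 1) → (sign (a * b) = 1 ∧ a * b * (a * b) = 1) := by
      decide +kernel
    exact fun {a b} => key a b
  inv_mem' := by
    rintro a ⟨h1, h2⟩
    exact ⟨by simp [h1], by rw [← mul_inv_rev, h2, inv_one]⟩

lemma mem_kleinFourS4 {g : Equiv.Perm (Fin 4)} :
    g ∈ kleinFourS4 ↔ sign g = 1 ∧ g * g = 1 := Iff.rfl

lemma kleinFourS4_normal : kleinFourS4.Normal := by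
  refine ⟨fun n hn g => ?_⟩
  rw [mem_kleinFourS4] at hn ⊢
  refine ⟨by simp [hn.1], ?_⟩
  calc g * n * g⁻¹ * (g * n * g⁻¹) = g * (n * n) * g⁻¹ := by group
    _ = 1 := by rw [hn.2]; group

/-- The squares of the conjugacy classes of `S₄`: a nontrivial class squared contains `V₄`, and a
class outside `V₄` squared contains `A₄`. -/
lemma exists_mul_conj_eq : ∀ g h : Equiv.Perm (Fin 4), g ≠ 1 → sign h = 1 →
    (h * h = 1 ∨ ¬ (sign g = 1 ∧ g * g = 1)) →
    ∃ a b : Equiv.Perm (Fin 4), a * g * a⁻¹ * (b * g * b⁻¹) = h := by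
  decide +kernel

/-- The chain `1 < V₄ < A₄ < S₄`. -/
def s4Chain : Fin 4 → Subgroup (Equiv.Perm (Fin 4)) :=
  ![⊥, kleinFourS4, alternatingGroup (Fin 4), ⊤]

lemma s4Chain_normal (i : Fin 4) : (s4Chain i).Normal := by
  fin_cases i
  · exact inferInstanceAs (⊥ : Subgroup (Equiv.Perm (Fin 4))).Normal
  · exact kleinFourS4_normal
  · exact inferInstanceAs (alternatingGroup (Fin 4)).Normal
  · exact inferInstanceAs (⊤ : Subgroup (Equiv.Perm (Fin 4))).Normal

lemma strictMono_s4Chain : StrictMono s4Chain := by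
  rw [Fin.strictMono_iff_lt_succ]
  intro i
  fin_cases i
  · change ⊥ < kleinFourS4
    refine SetLike.lt_iff_le_and_exists.2 ⟨bot_le, Equiv.swap 0 1 * Equiv.swap 2 3, ?_, ?_⟩
    · rw [mem_kleinFourS4]; decide
    · rw [Subgroup.mem_bot]; decide
  · change kleinFourS4 < alternatingGroup (Fin 4)
    refine SetLike.lt_iff_le_and_exists.2
      ⟨fun g hg => mem_alternatingGroup.2 hg.1, Equiv.swap 0 1 * Equiv.swap 1 2, ?_, ?_⟩
    · rw [mem_alternatingGroup]; decide
    · rw [mem_kleinFourS4]; decide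
  · change alternatingGroup (Fin 4) < ⊤
    refine SetLike.lt_iff_le_and_exists.2 ⟨le_top, Equiv.swap 0 1, Subgroup.mem_top _, ?_⟩
    rw [mem_alternatingGroup]; decide

lemma eq_chain_of_normal (N : Subgroup (Equiv.Perm (Fin 4))) (hN : N.Normal) :
    ∃ i, s4Chain i = N := by
  have mem_of {g h : Equiv.Perm (Fin 4)} (hg : g ∈ N) (hg1 : g ≠ 1) (hs : sign h = 1)
      (hh : h * h = 1 ∨ g ∉ kleinFourS4) : h ∈ N := by
    obtain ⟨a, b, rfl⟩ := exists_mul_conj_eq g h hg1 hs hh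
    exact N.mul_mem (hN.conj_mem g hg a) (hN.conj_mem g hg b)
  by_cases h0 : N ≤ ⊥
  · exact ⟨0, (le_bot_iff.1 h0).symm⟩
  by_cases h1 : N ≤ kleinFourS4
  · obtain ⟨g, hg, hg1⟩ := SetLike.not_le_iff_exists.1 h0
    exact ⟨1, le_antisymm (fun h hh => mem_of hg hg1 hh.1 (Or.inl hh.2)) h1⟩
  obtain ⟨g, hg, hgV⟩ := SetLike.not_le_iff_exists.1 h1
  have hA : alternatingGroup (Fin 4) ≤ N := fun h hh =>
    mem_of hg (fun e => hgV (e ▸ kleinFourS4.one_mem)) (mem_alternatingGroup.1 hh) (Or.inr hgV)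
  by_cases h2 : N ≤ alternatingGroup (Fin 4)
  · exact ⟨2, le_antisymm hA h2⟩
  obtain ⟨t, ht, htA⟩ := SetLike.not_le_iff_exists.1 h2
  have hts : sign t = -1 := (Int.units_eq_one_or _).resolve_left htA
  refine ⟨3, (eq_top_iff.2 fun h _ => ?_ : N = ⊤).symm⟩
  rcases Int.units_eq_one_or (sign h) with hs | hs
  · exact hA hs
  · refine (N.mul_mem_cancel_right ht).1 (hA ?_)
    rw [mem_alternatingGroup, Equiv.Perm.sign_mul, hs, hts]
    rfl

/-- The normal subgroup lattice of `S₄` is a chain of length 3: the subtype of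
normal subgroups of `Equiv.Perm (Fin 4)`, ordered by inclusion, is linearly
ordered and has exactly 4 elements (the chain `1 < V₄ < A₄ < S₄`). -/
theorem normalSubgroupLattice_s4_chain :
    (∀ N M : {N : Subgroup (Equiv.Perm (Fin 4)) // N.Normal}, N ≤ M ∨ M ≤ N) ∧
    Nat.card {N : Subgroup (Equiv.Perm (Fin 4)) // N.Normal} = 4 := by
  constructor
  · rintro ⟨N, hN⟩ ⟨M, hM⟩
    obtain ⟨i, rfl⟩ := eq_chain_of_normal N hN
    obtain ⟨j, rfl⟩ := eq_chain_of_normal M hM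
    exact (le_total i j).imp (strictMono_s4Chain.monotone ·) (strictMono_s4Chain.monotone ·)
  · have hbij : Function.Bijective
        (fun i => (⟨s4Chain i, s4Chain_normal i⟩ :
          {N : Subgroup (Equiv.Perm (Fin 4)) // N.Normal})) := by
      refine ⟨fun i j h => strictMono_s4Chain.injective (congrArg Subtype.val h), ?_⟩
      rintro ⟨N, hN⟩
      obtain ⟨i, hi⟩ := eq_chain_of_normal N hN
      exact ⟨i, Subtype.ext hi⟩
    rw [← Nat.card_eq_of_bijective _ hbij, Nat.card_fin]
end

section
/- Factor Permutation Lemma (permutation part): Let G be a tower group. For every lattice automorphism φ ∈ LatAut(G) and every index j = (k,i) ∈ ι, there exists an index j' = (k',i') ∈ ι with (k = 4 ↔ k' = 4) such that φ maps the factor F_j to the factor F_{j'} in 𝒩(G); that is, every lattice automorphism permutes the set of individual factors and preserves the partition into S_4-factors and non-S_4-factors. -/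
/-- The monoid embedding of `S_k` into the tower group at slot `j = (k, i)`. -/
def towerEmb (a : ℕ → ℕ) (j : Σ k : ℕ, Fin (a k)) :
    Equiv.Perm (Fin j.1) →* Π k : ℕ, Π _i : Fin (a k), Equiv.Perm (Fin k) :=
  (MonoidHom.mulSingle (fun k => Π _i : Fin (a k), Equiv.Perm (Fin k)) j.1).comp
    (MonoidHom.mulSingle (fun _ : Fin (a j.1) => Equiv.Perm (Fin j.1)) j.2)

/-- The factor `F_j = S_k^{(k,i)}` as a subgroup of the tower group. -/
def towerFactor (a : ℕ → ℕ) (j : Σ k : ℕ, Fin (a k)) :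
    Subgroup (Π k : ℕ, Π _i : Fin (a k), Equiv.Perm (Fin k)) :=
  (towerEmb a j).range

/-! ### Normal subgroups of `S_k` -/

open Equiv Equiv.Perm in
/-- `S_k` has trivial centre for `3 ≤ k`, phrased with commutators. -/
theorem perm_exists_not_commute {k : ℕ} (hk : 3 ≤ k) (x : Perm (Fin k)) (hx : x ≠ 1) :
    ∃ h : Perm (Fin k), h * x * h⁻¹ * x⁻¹ ≠ 1 := by
  obtain ⟨a, ha⟩ : ∃ a, x a ≠ a := by
    by_contra! h
    exact hx (Equiv.ext h)
  obtain ⟨c, hc⟩ : ∃ c, c ∉ ({a, x a} : Finset (Fin k)) := by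
    by_contra! h
    have h1 : Finset.univ.card ≤ ({a, x a} : Finset (Fin k)).card :=
      Finset.card_le_card fun y _ => h y
    have h2 := Finset.card_le_two (a := a) (b := x a)
    simp only [Finset.card_univ, Fintype.card_fin] at h1
    omega
  simp only [Finset.mem_insert, Finset.mem_singleton, not_or] at hc
  refine ⟨swap (x a) c, fun h => ?_⟩
  have h1 : swap (x a) c * x = x * swap (x a) c := by
    rw [mul_inv_eq_one, mul_inv_eq_iff_eq_mul] at h
    exact h
  have h2 := congrArg (fun f : Perm (Fin k) => f a) h1
  simp only [Perm.mul_apply, swap_apply_left] at h2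
  rw [swap_apply_of_ne_of_ne (Ne.symm ha) (Ne.symm hc.1)] at h2
  exact hc.2 h2

set_option maxRecDepth 100000 in
/-- The nontrivial normal subgroups of `S_3` contain `A_3`, in terms of elements. -/
theorem perm_three_even_eq :
    ∀ x y : Equiv.Perm (Fin 3), x ≠ 1 → Equiv.Perm.sign y = 1 →
      ∃ g h : Equiv.Perm (Fin 3), y = (g * x * g⁻¹) * (h * x⁻¹ * h⁻¹) := by
  decide

/-- For `3 ≤ k`, `k ≠ 4`, every nontrivial normal subgroup of `S_k` contains `A_k`. -/
theorem perm_even_mem_of_normal {k : ℕ} (hk : 3 ≤ k) (hk4 : k ≠ 4)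
    (N : Subgroup (Equiv.Perm (Fin k))) (hN : N.Normal) (hne : N ≠ ⊥)
    (y : Equiv.Perm (Fin k)) (hy : Equiv.Perm.sign y = 1) : y ∈ N := by
  by_cases h3 : k = 3
  · subst h3
    obtain ⟨x, hxN, hx⟩ := N.bot_or_exists_ne_one.resolve_left hne
    obtain ⟨g, h, rfl⟩ := perm_three_even_eq x y hx hy
    exact N.mul_mem (hN.conj_mem _ hxN g) (hN.conj_mem _ (N.inv_mem hxN) h)
  · have := Equiv.Perm.alternatingGroup_le_of_normal (α := Fin k)
      (by rw [Nat.card_eq_fintype_card, Fintype.card_fin]; omega)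
      ((Subgroup.nontrivial_iff_ne_bot N).2 hne)
    exact this (Equiv.Perm.mem_alternatingGroup.2 hy)

theorem perm_sign_mul_inv_eq_one {k : ℕ} {x y : Equiv.Perm (Fin k)}
    (hx : Equiv.Perm.sign x ≠ 1) (hy : Equiv.Perm.sign y ≠ 1) :
    Equiv.Perm.sign (x * y⁻¹) = 1 := by
  have hx' := (Int.units_eq_one_or (Equiv.Perm.sign x)).resolve_left hx
  have hy' := (Int.units_eq_one_or (Equiv.Perm.sign y)).resolve_left hy
  simp [hx', hy']

/-- Representatives of the conjugacy classes of `S_4`, ordered so that the normal closures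
increase. -/
def permFourRep : Fin 5 → Equiv.Perm (Fin 4) :=
  ![1, Equiv.swap 0 1 * Equiv.swap 2 3, Equiv.swap 0 1 * Equiv.swap 1 2, Equiv.swap 0 1,
    Equiv.swap 0 1 * Equiv.swap 1 2 * Equiv.swap 2 3]

set_option maxRecDepth 100000 in
theorem permFour_conj_rep :
    ∀ x : Equiv.Perm (Fin 4), ∃ i, ∃ g : Equiv.Perm (Fin 4), x = g * permFourRep i * g⁻¹ := by
  decide

set_option maxRecDepth 100000 in
/-- Each representative is a product of conjugates of the next one. -/
theorem permFour_rep_step :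
    (∃ g h : Equiv.Perm (Fin 4), permFourRep 1 =
      (g * permFourRep 2 * g⁻¹) * (h * permFourRep 2 * h⁻¹)) ∧
    (∃ g h : Equiv.Perm (Fin 4), permFourRep 2 =
      (g * permFourRep 3 * g⁻¹) * (h * permFourRep 3 * h⁻¹)) ∧
    (∃ g h l : Equiv.Perm (Fin 4), permFourRep 3 =
      (g * permFourRep 4 * g⁻¹) * (h * permFourRep 4 * h⁻¹) * (l * permFourRep 4 * l⁻¹)) := by
  decide

theorem permFour_rep_mem_mono (N : Subgroup (Equiv.Perm (Fin 4))) (hN : N.Normal)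
    {i j : Fin 5} (hij : i ≤ j) (hj : permFourRep j ∈ N) : permFourRep i ∈ N := by
  obtain ⟨⟨g, h, h1⟩, ⟨g', h', h2⟩, ⟨g'', h'', l, h3⟩⟩ := permFour_rep_step
  have c0 : permFourRep 0 ∈ N := N.one_mem
  have c1 : permFourRep 2 ∈ N → permFourRep 1 ∈ N := fun hm => by
    rw [h1]; exact N.mul_mem (hN.conj_mem _ hm _) (hN.conj_mem _ hm _)
  have c2 : permFourRep 3 ∈ N → permFourRep 2 ∈ N := fun hm => by
    rw [h2]; exact N.mul_mem (hN.conj_mem _ hm _) (hN.conj_mem _ hm _)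
  have c3 : permFourRep 4 ∈ N → permFourRep 3 ∈ N := fun hm => by
    rw [h3]
    exact N.mul_mem (N.mul_mem (hN.conj_mem _ hm _) (hN.conj_mem _ hm _)) (hN.conj_mem _ hm _)
  fin_cases i <;> fin_cases j <;> simp at hij hj ⊢ <;> tauto

theorem permFour_mem_iff (N : Subgroup (Equiv.Perm (Fin 4))) (hN : N.Normal)
    (x g : Equiv.Perm (Fin 4)) : g * x * g⁻¹ ∈ N ↔ x ∈ N :=
  ⟨fun h => by simpa [mul_assoc] using hN.conj_mem _ h g⁻¹, fun h => hN.conj_mem _ h g⟩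

/-- The normal subgroups of `S_k`, `3 ≤ k`, form a chain. -/
theorem perm_normal_total {k : ℕ} (hk : 3 ≤ k) (A B : Subgroup (Equiv.Perm (Fin k)))
    (hA : A.Normal) (hB : B.Normal) : A ≤ B ∨ B ≤ A := by
  by_contra! h
  obtain ⟨x, hxA, hxB⟩ := SetLike.not_le_iff_exists.1 h.1
  obtain ⟨y, hyB, hyA⟩ := SetLike.not_le_iff_exists.1 h.2
  by_cases hk4 : k = 4
  · subst hk4
    obtain ⟨i, g, rfl⟩ := permFour_conj_rep x
    obtain ⟨j, l, rfl⟩ := permFour_conj_rep y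
    rw [permFour_mem_iff _ (by assumption)] at hxA hxB hyA hyB
    rcases le_total i j with hij | hij
    · exact hxB (permFour_rep_mem_mono B hB hij hyB)
    · exact hyA (permFour_rep_mem_mono A hA hij hxA)
  · have hA0 : A ≠ ⊥ := fun h0 => h.1 (h0 ▸ bot_le)
    have hB0 : B ≠ ⊥ := fun h0 => h.2 (h0 ▸ bot_le)
    have eA := perm_even_mem_of_normal hk hk4 A hA hA0
    have eB := perm_even_mem_of_normal hk hk4 B hB hB0
    have := eB _ (perm_sign_mul_inv_eq_one (fun hx => hxB (eB x hx)) (fun hy => hyA (eA y hy)))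
    exact hxB (by simpa using B.mul_mem this hyB)

/-- For `k ≠ 4` the lattice of normal subgroups of `S_k` has no chain of four elements. -/
theorem perm_eq_top_of_chain {k : ℕ} (hk : 3 ≤ k) (hk4 : k ≠ 4)
    (A B C : Subgroup (Equiv.Perm (Fin k)))
    (hB : B.Normal) (hAB : A < B) (hBC : B < C) : C = ⊤ := by
  have eB := perm_even_mem_of_normal hk hk4 B hB (bot_le.trans_lt hAB).ne'
  obtain ⟨x, hxC, hxB⟩ := SetLike.exists_of_lt hBC
  refine (Subgroup.eq_top_iff' C).2 fun z => ?_
  by_cases hz : Equiv.Perm.sign z = 1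
  · exact hBC.le (eB z hz)
  · have := hBC.le (eB _ (perm_sign_mul_inv_eq_one hz fun hx => hxB (eB x hx)))
    simpa using C.mul_mem this hxC

set_option maxRecDepth 100000 in
/-- The Klein four-group in `S_4`, as the even permutations squaring to the identity. -/
def permFourKlein : Subgroup (Equiv.Perm (Fin 4)) where
  carrier := {x | x * x = 1 ∧ Equiv.Perm.sign x = 1}
  one_mem' := by simp
  inv_mem' := by
    rintro x ⟨h1, h2⟩
    exact ⟨by rw [← mul_inv_rev, h1, inv_one], by simp [h2]⟩
  mul_mem' := by
    have key : ∀ x y : Equiv.Perm (Fin 4), (x * x = 1 ∧ Equiv.Perm.sign x = 1) →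
      (y * y = 1 ∧ Equiv.Perm.sign y = 1) →
        (x * y) * (x * y) = 1 ∧ Equiv.Perm.sign (x * y) = 1 := by decide
    exact fun {x y} hx hy => key x y hx hy

theorem permFourKlein_normal : permFourKlein.Normal := by
  refine ⟨fun x hx g => ?_⟩
  obtain ⟨h1, h2⟩ := hx
  refine ⟨?_, by simp [h2]⟩
  have : g * x * g⁻¹ * (g * x * g⁻¹) = g * (x * x) * g⁻¹ := by group
  rw [this, h1]; simp

theorem bot_lt_permFourKlein : ⊥ < permFourKlein := by
  refine bot_lt_iff_ne_bot.2 fun h => ?_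
  have : Equiv.swap 0 1 * Equiv.swap 2 3 ∈ permFourKlein :=
    ⟨by decide, by decide⟩
  rw [h, Subgroup.mem_bot] at this
  exact absurd this (by decide)

theorem permFourKlein_lt_alternating : permFourKlein < alternatingGroup (Fin 4) := by
  refine lt_of_le_of_ne (fun x hx => Equiv.Perm.mem_alternatingGroup.2 hx.2) fun h => ?_
  have : Equiv.swap 0 1 * Equiv.swap 1 2 ∈ permFourKlein := by
    rw [h, Equiv.Perm.mem_alternatingGroup]; decide
  exact absurd this.1 (by decide)

theorem alternating_four_lt_top : alternatingGroup (Fin 4) < ⊤ := by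
  refine lt_top_iff_ne_top.2 fun h => ?_
  have : Equiv.swap 0 1 ∈ alternatingGroup (Fin 4) := by rw [h]; trivial
  rw [Equiv.Perm.mem_alternatingGroup] at this
  exact absurd this (by decide)

/-! ### Coordinates of the tower group -/

/-- The direct product of `a k` copies of `S_k` for each `k`. -/
abbrev TowerGroup (a : ℕ → ℕ) := Π k : ℕ, Π _i : Fin (a k), Equiv.Perm (Fin k)

theorem towerEmb_self (a : ℕ → ℕ) (j : Σ k : ℕ, Fin (a k)) (x : Equiv.Perm (Fin j.1)) :
    towerEmb a j x j.1 j.2 = x := by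
  simp [towerEmb]

theorem towerEmb_ne (a : ℕ → ℕ) (j i : Σ k : ℕ, Fin (a k)) (h : i ≠ j)
    (x : Equiv.Perm (Fin j.1)) : towerEmb a j x i.1 i.2 = 1 := by
  obtain ⟨k, s⟩ := j
  obtain ⟨l, t⟩ := i
  by_cases hk : l = k
  · subst hk
    have : t ≠ s := fun h' => h (by rw [h'])
    simp [towerEmb, Pi.mulSingle_eq_of_ne this]
  · simp [towerEmb, Pi.mulSingle_eq_of_ne hk]

theorem tower_ext {a : ℕ → ℕ} {x y : TowerGroup a}
    (h : ∀ j : Σ k : ℕ, Fin (a k), x j.1 j.2 = y j.1 j.2) : x = y :=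
  funext fun k => funext fun i => h ⟨k, i⟩

theorem towerEmb_injective (a : ℕ → ℕ) (j : Σ k : ℕ, Fin (a k)) :
    Function.Injective (towerEmb a j) := fun x y h => by
  rw [← towerEmb_self a j x, h, towerEmb_self]

theorem tower_conj_emb (a : ℕ → ℕ) (j : Σ k : ℕ, Fin (a k)) (g : TowerGroup a)
    (x : Equiv.Perm (Fin j.1)) :
    g * towerEmb a j x * g⁻¹ = towerEmb a j (g j.1 j.2 * x * (g j.1 j.2)⁻¹) := by
  refine tower_ext fun i => ?_
  by_cases h : i = j
  · subst h
    simp [towerEmb_self]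
  · simp [towerEmb_ne a j i h]

theorem mem_towerFactor_iff {a : ℕ → ℕ} {j : Σ k : ℕ, Fin (a k)} {x : TowerGroup a} :
    x ∈ towerFactor a j ↔ ∀ i : Σ k : ℕ, Fin (a k), i ≠ j → x i.1 i.2 = 1 := by
  constructor
  · rintro ⟨y, rfl⟩ i hi
    exact towerEmb_ne a j i hi y
  · refine fun h => ⟨x j.1 j.2, tower_ext fun i => ?_⟩
    by_cases hi : i = j
    · subst hi
      exact towerEmb_self _ _ _
    · rw [towerEmb_ne a j i hi, h i hi]

theorem tower_map_normal (a : ℕ → ℕ) (j : Σ k : ℕ, Fin (a k))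
    (N : Subgroup (Equiv.Perm (Fin j.1))) (hN : N.Normal) : (N.map (towerEmb a j)).Normal := by
  refine ⟨?_⟩
  rintro _ ⟨x, hx, rfl⟩ g
  rw [tower_conj_emb]
  exact ⟨_, hN.conj_mem x hx _, rfl⟩

theorem towerFactor_normal (a : ℕ → ℕ) (j : Σ k : ℕ, Fin (a k)) : (towerFactor a j).Normal := by
  rw [towerFactor, MonoidHom.range_eq_map]
  exact tower_map_normal a j ⊤ inferInstance

theorem map_comap_of_le_towerFactor {a : ℕ → ℕ} {j : Σ k : ℕ, Fin (a k)}
    {N : Subgroup (TowerGroup a)} (h : N ≤ towerFactor a j) :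
    (N.comap (towerEmb a j)).map (towerEmb a j) = N :=
  Subgroup.map_comap_eq_self h

theorem three_le_of_index {a : ℕ → ℕ} (ha_lt : ∀ k < 3, a k = 0) (j : Σ k : ℕ, Fin (a k)) :
    3 ≤ j.1 := by
  by_contra! h
  exact (Fin.cast (ha_lt _ h) j.2).elim0

/-! ### Lattice characterisation of the factors -/

/-- `N` bounds a chain: any two normal subgroups of the group below `N` are comparable. -/
def IsChainBelow {G : Type*} [Group G] (N : NormalSubgroupLattice G) : Prop :=
  ∀ A B : NormalSubgroupLattice G, A ≤ N → B ≤ N → A ≤ B ∨ B ≤ A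

theorem IsChainBelow.map {G : Type*} [Group G] {N : NormalSubgroupLattice G}
    (h : IsChainBelow N) (φ : LatAut G) : IsChainBelow (φ N) := by
  intro A B hA hB
  have := h (φ.symm A) (φ.symm B) (by rwa [OrderIso.symm_apply_le])
    (by rwa [OrderIso.symm_apply_le])
  simpa using this

/-- `N` is the top of a strict chain of four normal subgroups. -/
def HasDepth {G : Type*} [Group G] (N : NormalSubgroupLattice G) : Prop :=
  ∃ A B C : NormalSubgroupLattice G, A < B ∧ B < C ∧ C < N

theorem HasDepth.map {G : Type*} [Group G] {N : NormalSubgroupLattice G}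
    (h : HasDepth N) (φ : LatAut G) : HasDepth (φ N) := by
  obtain ⟨A, B, C, h1, h2, h3⟩ := h
  exact ⟨φ A, φ B, φ C, φ.strictMono h1, φ.strictMono h2, φ.strictMono h3⟩

/-- The factor `F_j` as an element of the lattice of normal subgroups. -/
def towerFactorN (a : ℕ → ℕ) (j : Σ k : ℕ, Fin (a k)) : NormalSubgroupLattice (TowerGroup a) :=
  ⟨towerFactor a j, towerFactor_normal a j⟩

theorem towerFactorN_isChainBelow {a : ℕ → ℕ} (ha_lt : ∀ k < 3, a k = 0)
    (j : Σ k : ℕ, Fin (a k)) : IsChainBelow (towerFactorN a j) := by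
  rintro ⟨A, hA⟩ ⟨B, hB⟩ hAj hBj
  have hAj : A ≤ towerFactor a j := hAj
  have hBj : B ≤ towerFactor a j := hBj
  change A ≤ B ∨ B ≤ A
  rw [← map_comap_of_le_towerFactor hAj, ← map_comap_of_le_towerFactor hBj]
  exact (perm_normal_total (three_le_of_index ha_lt j) _ _ (hA.comap _) (hB.comap _)).imp
    (Subgroup.map_mono ·) (Subgroup.map_mono ·)

/-- A normal subgroup meets each factor on which its projection is nontrivial, because `S_k` has
trivial centre. -/
theorem exists_emb_mem {a : ℕ → ℕ} (ha_lt : ∀ k < 3, a k = 0) {N : Subgroup (TowerGroup a)}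
    (hN : N.Normal) {x : TowerGroup a} (hx : x ∈ N) (j : Σ k : ℕ, Fin (a k))
    (hj : x j.1 j.2 ≠ 1) : ∃ y, y ≠ 1 ∧ towerEmb a j y ∈ N := by
  obtain ⟨h, hh⟩ := perm_exists_not_commute (three_le_of_index ha_lt j) _ hj
  refine ⟨_, hh, ?_⟩
  have h1 : towerEmb a j h * x * (towerEmb a j h)⁻¹ * x⁻¹ ∈ N :=
    N.mul_mem (hN.conj_mem _ hx _) (N.inv_mem hx)
  have h2 : towerEmb a j h * x * (towerEmb a j h)⁻¹ * x⁻¹ =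
      towerEmb a j h * (x * towerEmb a j h⁻¹ * x⁻¹) := by
    rw [map_inv]; group
  rw [h2, tower_conj_emb, ← map_mul] at h1
  simpa [mul_assoc] using h1

/-- A nontrivial normal subgroup bounding a chain cannot meet two factors, so it lies in one. -/
theorem IsChainBelow.exists_le {a : ℕ → ℕ} (ha_lt : ∀ k < 3, a k = 0)
    {N : NormalSubgroupLattice (TowerGroup a)} (hN : IsChainBelow N) (hne : N.1 ≠ ⊥) :
    ∃ j, N ≤ towerFactorN a j := by
  obtain ⟨x, hxN, hx⟩ := N.1.bot_or_exists_ne_one.resolve_left hne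
  obtain ⟨j, hj⟩ : ∃ j : Σ k : ℕ, Fin (a k), x j.1 j.2 ≠ 1 := by
    by_contra! h
    exact hx (tower_ext h)
  obtain ⟨y, hy, hyN⟩ := exists_emb_mem ha_lt N.2 hxN j hj
  refine ⟨j, fun z hz => mem_towerFactor_iff.2 fun i hij => ?_⟩
  by_contra hi
  obtain ⟨w, hw, hwN⟩ := exists_emb_mem ha_lt N.2 hz i hi
  have := N.2
  have := towerFactor_normal a j
  have := towerFactor_normal a i
  rcases hN ⟨N.1 ⊓ towerFactor a i, inferInstance⟩ ⟨N.1 ⊓ towerFactor a j, inferInstance⟩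
    (show N.1 ⊓ _ ≤ N.1 from inf_le_left) (show N.1 ⊓ _ ≤ N.1 from inf_le_left) with h | h
  · have h1 : towerEmb a i w ∈ N.1 ⊓ towerFactor a j := h ⟨hwN, w, rfl⟩
    have h2 := mem_towerFactor_iff.1 h1.2 i hij
    rw [towerEmb_self] at h2
    exact hw h2
  · have h1 : towerEmb a j y ∈ N.1 ⊓ towerFactor a i := h ⟨hyN, y, rfl⟩
    have h2 := mem_towerFactor_iff.1 h1.2 j (Ne.symm hij)
    rw [towerEmb_self] at h2
    exact hy h2

theorem towerFactor_exists_ne_one {a : ℕ → ℕ} (ha_lt : ∀ k < 3, a k = 0)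
    (j : Σ k : ℕ, Fin (a k)) : ∃ x : Equiv.Perm (Fin j.1), x ≠ 1 := by
  have h3 := three_le_of_index ha_lt j
  have : Nontrivial (Fin j.1) := Fin.nontrivial_iff_two_le.2 (by omega)
  exact exists_ne 1

theorem towerFactor_ne_bot {a : ℕ → ℕ} (ha_lt : ∀ k < 3, a k = 0)
    (j : Σ k : ℕ, Fin (a k)) : towerFactor a j ≠ ⊥ := by
  intro h
  obtain ⟨x, hx⟩ := towerFactor_exists_ne_one ha_lt j
  have : towerEmb a j x ∈ towerFactor a j := ⟨x, rfl⟩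
  rw [h, Subgroup.mem_bot, map_eq_one_iff _ (towerEmb_injective a j)] at this
  exact hx this

theorem eq_of_towerFactorN_le {a : ℕ → ℕ} (ha_lt : ∀ k < 3, a k = 0)
    {i j : Σ k : ℕ, Fin (a k)} (h : towerFactorN a i ≤ towerFactorN a j) : i = j := by
  by_contra hij
  obtain ⟨x, hx⟩ := towerFactor_exists_ne_one ha_lt i
  have h1 : towerEmb a i x ∈ towerFactor a j := h ⟨x, rfl⟩
  have h2 := mem_towerFactor_iff.1 h1 i hij
  rw [towerEmb_self] at h2
  exact hx h2

theorem latAut_ne_bot {G : Type*} [Group G] (φ : LatAut G) {N : NormalSubgroupLattice G}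
    (h : N.1 ≠ ⊥) : (φ N).1 ≠ ⊥ := by
  intro h0
  have h1 : φ N ≤ φ ⟨⊥, inferInstance⟩ := by
    change (φ N).1 ≤ _
    rw [h0]; exact bot_le
  exact h (le_bot_iff.1 (φ.le_iff_le.1 h1))

/-- The length of the chain below a factor singles out the `S_4`-factors. -/
theorem towerFactorN_hasDepth_iff {a : ℕ → ℕ} (ha_lt : ∀ k < 3, a k = 0)
    (j : Σ k : ℕ, Fin (a k)) : HasDepth (towerFactorN a j) ↔ j.1 = 4 := by
  have h3 := three_le_of_index ha_lt j
  constructor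
  · rintro ⟨⟨A, hA⟩, ⟨B, hB⟩, ⟨C, hC⟩, h1, h2, h4⟩
    have h1 : A < B := h1
    have h2 : B < C := h2
    have h4 : C < towerFactor a j := h4
    by_contra hj
    have strict : ∀ {P Q : Subgroup (TowerGroup a)}, P < Q → Q ≤ towerFactor a j →
        P.comap (towerEmb a j) < Q.comap (towerEmb a j) := by
      intro P Q hPQ hQ
      refine lt_of_le_of_ne (Subgroup.comap_mono hPQ.le) fun he => hPQ.ne ?_
      rw [← map_comap_of_le_towerFactor hQ, ← he,
        map_comap_of_le_towerFactor (hPQ.le.trans hQ)]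
    have htop := perm_eq_top_of_chain h3 hj _ _ _ (hB.comap (towerEmb a j))
      (strict h1 (h2.le.trans h4.le)) (strict h2 h4.le)
    refine h4.ne ?_
    rw [← map_comap_of_le_towerFactor h4.le, htop, towerFactor, MonoidHom.range_eq_map]
  · obtain ⟨k, i⟩ := j
    intro hk
    change k = 4 at hk
    subst hk
    have strict : StrictMono (Subgroup.map (towerEmb a ⟨4, i⟩)) :=
      (Subgroup.gc_map_comap _).monotone_l.strictMono_of_injective
        (Subgroup.map_injective (towerEmb_injective a _))
    refine ⟨⟨Subgroup.map (towerEmb a ⟨4, i⟩) ⊥, tower_map_normal a _ _ inferInstance⟩,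
      ⟨Subgroup.map (towerEmb a ⟨4, i⟩) permFourKlein,
        tower_map_normal a _ _ permFourKlein_normal⟩,
      ⟨Subgroup.map (towerEmb a ⟨4, i⟩) (alternatingGroup (Fin 4)),
        tower_map_normal a _ _ inferInstance⟩,
      strict bot_lt_permFourKlein, strict permFourKlein_lt_alternating, ?_⟩
    change Subgroup.map _ _ < towerFactor a _
    rw [towerFactor, MonoidHom.range_eq_map]
    exact strict alternating_four_lt_top

/-- **Factor Permutation Lemma (permutation part).** Every lattice automorphism
of a tower group permutes the set of individual factors `F_j` and preserves the
partition into `S₄`-factors and non-`S₄`-factors. -/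
theorem latAut_permutes_factors
    (a : ℕ → ℕ) (ha_fin : {k : ℕ | a k ≠ 0}.Finite)
    (ha_lt : ∀ k < 3, a k = 0)
    (φ : LatAut (Π k : ℕ, Π _i : Fin (a k), Equiv.Perm (Fin k)))
    (j : Σ k : ℕ, Fin (a k)) :
    ∃ j' : Σ k : ℕ, Fin (a k), (j.1 = 4 ↔ j'.1 = 4) ∧
      ∀ N : NormalSubgroupLattice (Π k : ℕ, Π _i : Fin (a k), Equiv.Perm (Fin k)),
        N.1 = towerFactor a j → (φ N).1 = towerFactor a j' := by
  have hchain := towerFactorN_isChainBelow ha_lt j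
  obtain ⟨j', hj'⟩ := (hchain.map φ).exists_le ha_lt
    (latAut_ne_bot φ (towerFactor_ne_bot ha_lt j))
  -- Maximality of `F_j`: the preimage of `F_{j'}` also bounds a chain and contains `F_j`.
  obtain ⟨i, hi⟩ := ((towerFactorN_isChainBelow ha_lt j').map φ.symm).exists_le ha_lt
    (latAut_ne_bot φ.symm (towerFactor_ne_bot ha_lt j'))
  have hle : towerFactorN a j ≤ φ.symm (towerFactorN a j') := (φ.le_symm_apply).2 hj'
  obtain rfl := eq_of_towerFactorN_le ha_lt (hle.trans hi)
  have heq : φ (towerFactorN a j) = towerFactorN a j' :=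
    le_antisymm hj' ((φ.symm_apply_le).1 hi)
  refine ⟨j', ?_, fun N hN => ?_⟩
  · rw [← towerFactorN_hasDepth_iff ha_lt j, ← towerFactorN_hasDepth_iff ha_lt j', ← heq]
    exact ⟨fun h => h.map φ, fun h => by simpa using h.map φ.symm⟩
  · have : N = towerFactorN a j := Subtype.ext hN
    rw [this, heq]
    rfl
end
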